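/- arXiv:1402.6134 — 3 statements merged into one kernel-verified Lean document; each statement's English description precedes it below -/
import Mathlib

section
/- Let n ≥ 1, 1 < p < ∞ and β < p − 1. Let Ω₀ ⊆ ℝⁿ be an open set whose complement Ω₀^c is nonempty and unbounded and satisfies: there exist 0 ≤ s < p − β and c₀ > 0 with |(Ω₀^c)_r ∩ B(x,R)| ≥ c₀ (r/R)^s |B(x,R)| for every x ∈ Ω₀^c and all 0 < r < R < ∞ (the upper Assouad codimension of Ω₀^c is less than p − β). Let F ⊆ closure(Ω₀) be a nonempty closed set satisfying: there exist t > p − β and C_A ≥ 1 with |F_r ∩ B(x,R)| ≤ C_A (r/R)^t |B(x,R)| for every x ∈ F and all 0 < r < R < ∞ (the lower Assouad codimension of F exceeds p − β). Set Ω = Ω₀ \ F. Then there exists C > 0 such that ∫_Ω |u(x)|^p d_Ω(x)^{β−p} dx ≤ C ∫_Ω ‖∇u(x)‖^p d_Ω(x)^β dx for every Lipschitz function u : ℝⁿ → ℝ with compact support contained in Ω₀; in particular the test functions need not vanish on F ∩ Ω₀. -/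
open MeasureTheory Metric ENNReal


theorem inner_layer (a l : ℝ) (ha : 0 < a) (hl : 0 < l) (e : ℝ≥0∞) (he : e ≠ ⊤) :
    ∫⁻ r in Set.Ioi (0:ℝ), ENNReal.ofReal (r ^ (-a-1)) * (if e < ENNReal.ofReal (l * r) then 1 else 0)
      = ENNReal.ofReal (l ^ a / a) * e ^ (-a) := by
  lift e to NNReal using he
  have hset : ∀ r : ℝ, ((e:ℝ≥0∞) < ENNReal.ofReal (l * r)) ↔ r ∈ Set.Ioi ((e:ℝ) / l) := by
    intro r
    rw [Set.mem_Ioi, div_lt_iff₀ hl, mul_comm r l]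
    have : (e : ℝ≥0∞) = ENNReal.ofReal (e:ℝ) := by simp
    rw [this, ENNReal.ofReal_lt_ofReal_iff']
    constructor
    · exact fun h => h.1
    · exact fun h => ⟨h, lt_of_le_of_lt e.2 h⟩
  have h1 : ∫⁻ r in Set.Ioi (0:ℝ), ENNReal.ofReal (r ^ (-a-1)) * (if (e:ℝ≥0∞) < ENNReal.ofReal (l * r) then 1 else 0)
      = ∫⁻ r in Set.Ioi ((e:ℝ)/l), ENNReal.ofReal (r ^ (-a-1)) := by
    rw [← lintegral_indicator measurableSet_Ioi, ← lintegral_indicator measurableSet_Ioi]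
    congr 1
    ext r
    by_cases hr : r ∈ Set.Ioi ((e:ℝ)/l)
    · have h0 : r ∈ Set.Ioi (0:ℝ) :=
        lt_of_le_of_lt (show (0:ℝ) ≤ (e:ℝ)/l by positivity) (Set.mem_Ioi.1 hr)
      rw [Set.indicator_of_mem hr, Set.indicator_of_mem h0, if_pos ((hset r).2 hr), mul_one]
    · rw [Set.indicator_of_notMem hr]
      apply Set.indicator_apply_eq_zero.2
      intro _
      rw [if_neg (fun h => hr ((hset r).1 h)), mul_zero]
  rw [h1]
  rcases eq_or_ne e 0 with rfl | he0
  · have : ((0:NNReal):ℝ≥0∞) ^ (-a) = ⊤ := by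
      rw [ENNReal.coe_zero, ENNReal.zero_rpow_of_neg (by linarith)]
    rw [this, ENNReal.mul_top (by simp; positivity)]
    simp only [NNReal.coe_zero, zero_div]
    by_contra hne
    apply not_integrableOn_Ioi_rpow (-a-1)
    refine ⟨(measurable_id.pow_const _).aestronglyMeasurable, ?_⟩
    rw [hasFiniteIntegral_iff_ofReal]
    · exact lt_top_iff_ne_top.2 hne
    · filter_upwards [ae_restrict_mem measurableSet_Ioi] with r hr
      exact Real.rpow_nonneg (le_of_lt hr) _
  · have hpos : 0 < (e:ℝ)/l := by positivity
    have hpe : 0 < (e:ℝ) := by positivity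
    rw [← ofReal_integral_eq_lintegral_ofReal (integrableOn_Ioi_rpow_of_lt (by linarith) hpos),
      integral_Ioi_rpow_of_lt (by linarith) hpos]
    · have : (e:ℝ≥0∞) ^ (-a) = ENNReal.ofReal ((e:ℝ) ^ (-a)) := by
        rw [← ENNReal.ofReal_rpow_of_pos hpe]; simp
      rw [this, ← ENNReal.ofReal_mul (by positivity)]
      congr 1
      rw [show -a - 1 + 1 = -a by ring, Real.div_rpow hpe.le hl.le, Real.rpow_neg hl.le]
      field_simp
    · filter_upwards [ae_restrict_mem measurableSet_Ioi] with r hr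
      exact Real.rpow_nonneg (le_of_lt (hpos.trans hr)) _

theorem layer_cake {X : Type*} [PseudoEMetricSpace X] [MeasurableSpace X] [OpensMeasurableSpace X]
    (μ : Measure X) [SFinite μ] (E : Set X) (hE : ∀ x, infEDist x E ≠ ⊤)
    (h : X → ℝ≥0∞) (hh : Measurable h) (a l : ℝ) (ha : 0 < a) (hl : 0 < l) :
    ∫⁻ r in Set.Ioi (0:ℝ), ENNReal.ofReal (r ^ (-a-1)) * ∫⁻ x in thickening (l * r) E, h x ∂μ
      = ENNReal.ofReal (l ^ a / a) * ∫⁻ x, h x * (infEDist x E) ^ (-a) ∂μ := by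
  have hm : Measurable (fun q : ℝ × X => if infEDist q.2 E < ENNReal.ofReal (l * q.1) then (1:ℝ≥0∞) else 0) := by
    refine Measurable.ite ?_ measurable_const measurable_const
    exact measurableSet_lt (measurable_infEDist.comp measurable_snd) (by fun_prop)
  have hm2 : Measurable (fun q : ℝ × X => ENNReal.ofReal (q.1 ^ (-a-1)) * (h q.2 *
      if infEDist q.2 E < ENNReal.ofReal (l * q.1) then (1:ℝ≥0∞) else 0)) := by
    exact ((measurable_fst.pow_const _).ennreal_ofReal).mul ((hh.comp measurable_snd).mul hm)
  have h1 : ∀ r : ℝ, ENNReal.ofReal (r ^ (-a-1)) * ∫⁻ x in thickening (l * r) E, h x ∂μ =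
      ∫⁻ x, ENNReal.ofReal (r ^ (-a-1)) * (h x * if infEDist x E < ENNReal.ofReal (l * r) then 1 else 0) ∂μ := by
    intro r
    have hmr : Measurable (fun x => h x * if infEDist x E < ENNReal.ofReal (l * r) then (1:ℝ≥0∞) else 0) :=
      hh.mul (hm.comp (measurable_prodMk_left (x := r)))
    rw [lintegral_const_mul _ hmr, ← lintegral_indicator isOpen_thickening.measurableSet]
    congr 2
    ext x
    by_cases hx : x ∈ thickening (l*r) E
    · rw [Set.indicator_of_mem hx, if_pos (mem_thickening_iff_infEDist_lt.1 hx), mul_one]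
    · rw [Set.indicator_of_notMem hx, if_neg (fun h => hx (mem_thickening_iff_infEDist_lt.2 h)), mul_zero]
  simp_rw [h1]
  have hmd : Measurable (fun x => h x * infEDist x E ^ (-a)) := hh.mul (measurable_infEDist.pow_const _)
  rw [lintegral_lintegral_swap hm2.aemeasurable, ← lintegral_const_mul _ hmd]
  congr 1
  ext x
  rw [mul_left_comm, ← inner_layer a l ha hl _ (hE x), ← lintegral_const_mul]
  · congr 1; ext r; ring
  · have h2 : Measurable (fun r : ℝ => ENNReal.ofReal (r ^ (-a-1))) := (measurable_id.pow_const _).ennreal_ofReal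
    have h3 : Measurable (fun r : ℝ => if infEDist x E < ENNReal.ofReal (l * r) then (1:ℝ≥0∞) else 0) :=
      Measurable.ite (measurableSet_lt measurable_const (by fun_prop)) measurable_const measurable_const
    exact h2.mul h3

theorem lip_line (φ : ℝ → ℝ) (L : NNReal) (hφ : LipschitzWith L φ) :
    ‖φ 1 - φ 0‖ₑ ≤ ∫⁻ τ in Set.Ioc (0:ℝ) 1, ‖deriv φ τ‖ₑ := by
  have hac := (hφ.lipschitzOnWith (s := Set.uIcc 0 1)).absolutelyContinuousOnInterval
  rw [← hac.integral_deriv_eq_sub, intervalIntegral.integral_of_le zero_le_one]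
  exact enorm_integral_le_lintegral_enorm _

theorem lip_trans {n : ℕ} (u : EuclideanSpace ℝ (Fin n) → ℝ) (L : NNReal) (hu : LipschitzWith L u)
    (h : EuclideanSpace ℝ (Fin n)) (ρ R : ℝ) (hρ : ‖h‖ ≤ ρ)
    (E : Set (EuclideanSpace ℝ (Fin n))) :
    ∫⁻ x in thickening R E, ‖u (x + h) - u x‖ₑ ≤
      ENNReal.ofReal ρ * ∫⁻ x in thickening (R + ρ) E, ‖fderiv ℝ u x‖ₑ := by
  have hdm : Measurable (fun x => ‖fderiv ℝ u x‖ₑ) := (measurable_fderiv ℝ u).enorm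
  have hdiff := hu.ae_differentiableAt (μ := volume)
  have hT : MeasurableSet (thickening R E) := isOpen_thickening.measurableSet
  have key : ∀ᵐ x : EuclideanSpace ℝ (Fin n), ∀ᵐ τ : ℝ, DifferentiableAt ℝ u (x + τ • h) := by
    have hms : MeasurableSet {x | DifferentiableAt ℝ u x} := measurableSet_of_differentiableAt ℝ u
    have : ∀ᵐ τ : ℝ, ∀ᵐ x : EuclideanSpace ℝ (Fin n), DifferentiableAt ℝ u (x + τ • h) := by
      refine Filter.Eventually.of_forall fun τ => ?_
      exact (measurePreserving_add_right volume (τ • h)).quasiMeasurePreserving.ae hdiff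
    rw [Measure.ae_ae_comm] at this
    · exact this
    · exact hms.preimage (by fun_prop)
  have h1 : ∀ᵐ x : EuclideanSpace ℝ (Fin n), ‖u (x + h) - u x‖ₑ ≤
      ∫⁻ τ in Set.Ioc (0:ℝ) 1, ENNReal.ofReal ρ * ‖fderiv ℝ u (x + τ • h)‖ₑ := by
    filter_upwards [key] with x hx
    have hline : LipschitzWith (‖h‖₊) (fun τ : ℝ => x + τ • h) := by
      refine LipschitzWith.of_dist_le_mul fun a b => ?_
      rw [dist_add_left, dist_eq_norm, ← sub_smul, norm_smul, mul_comm, dist_eq_norm]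
      rfl
    have := lip_line (fun τ => u (x + τ • h)) _ (hu.comp hline)
    simp only [one_smul, zero_smul, add_zero] at this
    refine this.trans (lintegral_mono_ae ?_)
    filter_upwards [ae_restrict_of_ae hx] with τ hτ
    have hd : HasDerivAt (fun τ : ℝ => x + τ • h) h τ := by
      simpa using ((hasDerivAt_id τ).smul_const h).const_add x
    have hc : HasDerivAt (fun τ : ℝ => u (x + τ • h)) (fderiv ℝ u (x + τ • h) h) τ :=
      hτ.hasFDerivAt.comp_hasDerivAt τ hd
    rw [hc.deriv]
    refine (ContinuousLinearMap.le_opENorm _ _).trans ?_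
    rw [mul_comm]
    gcongr
    rw [← ofReal_norm]
    exact ENNReal.ofReal_le_ofReal hρ
  have hm2 : Measurable (fun q : EuclideanSpace ℝ (Fin n) × ℝ => ENNReal.ofReal ρ * ‖fderiv ℝ u (q.1 + q.2 • h)‖ₑ) :=
    (hdm.comp (by fun_prop)).const_mul _
  calc _ ≤ ∫⁻ x in thickening R E, ∫⁻ τ in Set.Ioc (0:ℝ) 1, ENNReal.ofReal ρ * ‖fderiv ℝ u (x + τ • h)‖ₑ :=
        lintegral_mono_ae (ae_restrict_of_ae h1)
    _ = ∫⁻ τ in Set.Ioc (0:ℝ) 1, ∫⁻ x in thickening R E, ENNReal.ofReal ρ * ‖fderiv ℝ u (x + τ • h)‖ₑ :=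
        lintegral_lintegral_swap hm2.aemeasurable
    _ ≤ ∫⁻ τ in Set.Ioc (0:ℝ) 1, ENNReal.ofReal ρ * ∫⁻ x in thickening (R + ρ) E, ‖fderiv ℝ u x‖ₑ := by
        refine setLIntegral_mono measurable_const fun τ hτ => ?_
        have hmt : Measurable (fun x => ‖fderiv ℝ u (x + τ • h)‖ₑ) := hdm.comp (by fun_prop)
        rw [lintegral_const_mul _ hmt]
        refine mul_le_mul_right ?_ _
        rw [← lintegral_indicator hT, ← lintegral_indicator isOpen_thickening.measurableSet]
        rw [← lintegral_add_right_eq_self ((thickening (R + ρ) E).indicator _) (τ • h)]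
        refine lintegral_mono fun x => ?_
        by_cases hx : x ∈ thickening R E
        · have hx2 : x + τ • h ∈ thickening (R + ρ) E := by
            rw [mem_thickening_iff] at hx ⊢
            obtain ⟨z, hz, hxz⟩ := hx
            refine ⟨z, hz, ?_⟩
            have : dist (x + τ • h) x ≤ ρ := by
              rw [dist_eq_norm, add_sub_cancel_left, norm_smul, Real.norm_of_nonneg hτ.1.le]
              nlinarith [hτ.2, norm_nonneg h]
            linarith [dist_triangle (x + τ • h) x z]
          rw [Set.indicator_of_mem hx, Set.indicator_of_mem hx2]
        · rw [Set.indicator_of_notMem hx]; exact zero_le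
    _ = _ := by simp


theorem absorb {X : Type*} [PseudoEMetricSpace X] [MeasurableSpace X] [OpensMeasurableSpace X]
    (μ : Measure X) [SFinite μ] (E : Set X) (hE : ∀ x, infEDist x E ≠ ⊤)
    (f g : X → ℝ≥0∞) (hf : Measurable f) (hg : Measurable g) (γ K C l m : ℝ) (hγ : 1 < γ)
    (hK : 0 ≤ K) (hC : 0 ≤ C) (hl : 0 < l) (hm : 0 < m) (hKl : K * l ^ γ ≤ 1 / 2)
    (hfin : ∫⁻ x, f x * (infEDist x E) ^ (-γ) ∂μ ≠ ⊤)
    (step : ∀ r : ℝ, 0 < r → ∫⁻ x in thickening r E, f x ∂μ ≤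
      ENNReal.ofReal K * ∫⁻ x in thickening (l * r) E, f x ∂μ +
      ENNReal.ofReal (C * r) * ∫⁻ x in thickening (m * r) E, g x ∂μ) :
    ∫⁻ x, f x * (infEDist x E) ^ (-γ) ∂μ ≤
      ENNReal.ofReal (2 * (γ * C * (m ^ (γ - 1) / (γ - 1)))) * ∫⁻ x, g x * (infEDist x E) ^ (1 - γ) ∂μ := by
  have hγ0 : 0 < γ := by linarith
  have hγ1 : 0 < γ - 1 := by linarith
  have l1 := layer_cake μ E hE f hf γ 1 hγ0 one_pos
  have l2 := layer_cake μ E hE f hf γ l hγ0 hl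
  have l3 := layer_cake μ E hE g hg (γ - 1) m hγ1 hm
  rw [show -(γ-1) = 1 - γ by ring] at l3
  set I := ∫⁻ x, f x * (infEDist x E) ^ (-γ) ∂μ
  set G := ∫⁻ x, g x * (infEDist x E) ^ (1 - γ) ∂μ
  have hmeas : ∀ (l : ℝ) (h : X → ℝ≥0∞), Measurable (fun r : ℝ => ∫⁻ x in thickening (l * r) E, h x ∂μ) ∨ l ≤ 0 := by
    intro l h
    rcases le_or_gt l 0 with h0 | h0
    · exact Or.inr h0
    left
    apply Monotone.measurable
    intro a b hab
    exact lintegral_mono_set (thickening_mono (by gcongr) _)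
  have hm2 := (hmeas l f).resolve_right (not_le.2 hl)
  have hm3 := (hmeas m g).resolve_right (not_le.2 hm)
  have hp2 : ∀ a : ℝ, Measurable (fun r : ℝ => ENNReal.ofReal (r ^ a)) := fun a =>
    (measurable_id.pow_const _).ennreal_ofReal
  have h1 : ENNReal.ofReal (1 / γ) * I ≤ ENNReal.ofReal K * (ENNReal.ofReal (l ^ γ / γ) * I) +
      ENNReal.ofReal C * (ENNReal.ofReal (m ^ (γ - 1) / (γ - 1)) * G) := by
    rw [← l2, ← l3]
    rw [Real.one_rpow] at l1
    have q2 : Measurable (fun r : ℝ => ENNReal.ofReal (r ^ (-γ - 1)) * ∫⁻ x in thickening (l * r) E, f x ∂μ) :=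
      (hp2 _).mul hm2
    have q3 : Measurable (fun r : ℝ => ENNReal.ofReal (r ^ (1 - γ - 1)) * ∫⁻ x in thickening (m * r) E, g x ∂μ) :=
      (hp2 _).mul hm3
    rw [← l1, ← lintegral_const_mul _ q2, ← lintegral_const_mul _ q3,
      ← lintegral_add_left (q2.const_mul _)]
    refine setLIntegral_mono' measurableSet_Ioi fun r hr => ?_
    have hr0 : 0 < r := hr
    have := step r hr0
    rw [one_mul]
    refine (mul_le_mul_right this _).trans (le_of_eq ?_)
    rw [mul_add, ENNReal.ofReal_mul hC]
    have e : ENNReal.ofReal (r ^ (1 - γ - 1)) = ENNReal.ofReal (r ^ (-γ - 1)) * ENNReal.ofReal r := by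
      rw [← ENNReal.ofReal_mul (by positivity)]
      congr 1
      rw [← Real.rpow_add_one hr0.ne']
      congr 1; ring
    rw [e]
    ring
  have h2 : I ≤ ENNReal.ofReal (1/2) * I + ENNReal.ofReal (γ * C * (m ^ (γ - 1) / (γ - 1))) * G := by
    have := mul_le_mul_right h1 (ENNReal.ofReal γ)
    rw [← mul_assoc, ← ENNReal.ofReal_mul hγ0.le, mul_one_div_cancel hγ0.ne', ENNReal.ofReal_one, one_mul] at this
    refine this.trans ?_
    rw [mul_add]
    simp only [← mul_assoc]
    rw [← ENNReal.ofReal_mul hγ0.le, ← ENNReal.ofReal_mul hγ0.le, ← ENNReal.ofReal_mul (by positivity),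
      ← ENNReal.ofReal_mul (by positivity)]
    gcongr
    refine le_trans (le_of_eq ?_) hKl
    field_simp
  have h3 : ENNReal.ofReal (1/2) * I ≤ ENNReal.ofReal (γ * C * (m ^ (γ - 1) / (γ - 1))) * G := by
    have e : I = ENNReal.ofReal (1/2) * I + ENNReal.ofReal (1/2) * I := by
      rw [← add_mul, ← ENNReal.ofReal_add (by norm_num) (by norm_num)]; norm_num
    nth_rw 1 [e] at h2
    exact ENNReal.le_of_add_le_add_left (ENNReal.mul_ne_top (by simp) hfin) h2
  calc I = ENNReal.ofReal 2 * (ENNReal.ofReal (1/2) * I) := by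
        rw [← mul_assoc, ← ENNReal.ofReal_mul (by norm_num)]; norm_num
    _ ≤ ENNReal.ofReal 2 * (ENNReal.ofReal (γ * C * (m ^ (γ - 1) / (γ - 1))) * G) := by gcongr
    _ = _ := by rw [← mul_assoc, ← ENNReal.ofReal_mul (by norm_num)]

theorem swap_ball {n : ℕ} (S T : Set (EuclideanSpace ℝ (Fin n))) (ρ : ℝ) (h : EuclideanSpace ℝ (Fin n) → ℝ≥0∞) (hh : Measurable h) :
    ∫⁻ x in S, ∫⁻ y in T ∩ closedBall x ρ, h y = ∫⁻ y in T, h y * volume (S ∩ closedBall y ρ) := by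
  have hset : MeasurableSet {q : EuclideanSpace ℝ (Fin n) × EuclideanSpace ℝ (Fin n) | dist q.2 q.1 ≤ ρ} :=
    measurableSet_le (by fun_prop) measurable_const
  have hm : Measurable (fun q : EuclideanSpace ℝ (Fin n) × EuclideanSpace ℝ (Fin n) =>
      {q : EuclideanSpace ℝ (Fin n) × EuclideanSpace ℝ (Fin n) | dist q.2 q.1 ≤ ρ}.indicator (fun q => h q.2) q) :=
    (hh.comp measurable_snd).indicator hset
  have h1 : ∀ x, ∫⁻ y in T ∩ closedBall x ρ, h y = ∫⁻ y in T,
      {q : EuclideanSpace ℝ (Fin n) × EuclideanSpace ℝ (Fin n) | dist q.2 q.1 ≤ ρ}.indicator (fun q => h q.2) (x, y) := by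
    intro x
    rw [Set.inter_comm, ← Measure.restrict_restrict measurableSet_closedBall,
      ← lintegral_indicator measurableSet_closedBall]
    rfl
  simp_rw [h1]
  rw [lintegral_lintegral_swap hm.aemeasurable]
  congr 1
  ext y
  have : ∀ x, {q : EuclideanSpace ℝ (Fin n) × EuclideanSpace ℝ (Fin n) | dist q.2 q.1 ≤ ρ}.indicator (fun q => h q.2) (x, y)
      = (closedBall y ρ).indicator (fun _ => h y) x := by
    intro x
    simp only [Set.indicator, Set.mem_ofPred_eq, mem_closedBall, dist_comm]
  simp_rw [this]
  rw [lintegral_indicator measurableSet_closedBall, Measure.restrict_restrict measurableSet_closedBall,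
    setLIntegral_const, Set.inter_comm]

theorem osc_bound {n : ℕ} (u : EuclideanSpace ℝ (Fin n) → ℝ) (L : NNReal) (hu : LipschitzWith L u)
    (ρ R : ℝ) (E : Set (EuclideanSpace ℝ (Fin n))) :
    ∫⁻ x in thickening R E, ∫⁻ y in closedBall x ρ, ‖u y - u x‖ₑ ≤
      volume (closedBall (0 : EuclideanSpace ℝ (Fin n)) ρ) *
      (ENNReal.ofReal ρ * ∫⁻ x in thickening (R + ρ) E, ‖fderiv ℝ u x‖ₑ) := by
  have h1 : ∀ x, ∫⁻ y in closedBall x ρ, ‖u y - u x‖ₑ =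
      ∫⁻ h in closedBall (0 : EuclideanSpace ℝ (Fin n)) ρ, ‖u (x + h) - u x‖ₑ := by
    intro x
    rw [← lintegral_indicator measurableSet_closedBall, ← lintegral_indicator measurableSet_closedBall,
      ← lintegral_add_left_eq_self _ x]
    congr 1
    ext h
    simp only [Set.indicator, mem_closedBall, dist_self_add_left, dist_zero_right]
  simp_rw [h1]
  have hc := hu.continuous
  have hm : Measurable (fun q : EuclideanSpace ℝ (Fin n) × EuclideanSpace ℝ (Fin n) => ‖u (q.1 + q.2) - u q.1‖ₑ) := by
    apply Continuous.measurable; fun_prop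
  rw [lintegral_lintegral_swap hm.aemeasurable]
  calc _ ≤ ∫⁻ h in closedBall (0 : EuclideanSpace ℝ (Fin n)) ρ, 
        (ENNReal.ofReal ρ * ∫⁻ x in thickening (R + ρ) E, ‖fderiv ℝ u x‖ₑ) := by
        refine setLIntegral_mono measurable_const fun h hh => ?_
        exact lip_trans u L hu h ρ R (by simpa using hh) E
    _ = _ := by rw [setLIntegral_const, mul_comm]


theorem exists_big (K a : ℝ) (ha : 0 < a) : ∃ M : ℝ, 1 < M ∧ K * M ^ (-a) ≤ 1 / 2 := by
  have h := (tendsto_rpow_neg_atTop ha).const_mul K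
  rw [mul_zero] at h
  obtain ⟨M, h1, h2⟩ := ((h.eventually_le_const (by norm_num : (0:ℝ) < 1/2)).and (Filter.eventually_gt_atTop 1)).exists
  exact ⟨M, h2, h1⟩

theorem ball_scale {n : ℕ} (x : EuclideanSpace ℝ (Fin n)) (k R : ℝ) (hk : 0 < k) :
    volume (closedBall x (k * R)) = ENNReal.ofReal (k ^ n) * volume (closedBall (0 : EuclideanSpace ℝ (Fin n)) R) := by
  rw [Measure.addHaar_closedBall_mul_of_pos volume x hk]
  simp

theorem ball_center {n : ℕ} (x : EuclideanSpace ℝ (Fin n)) (R : ℝ) :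
    volume (closedBall x R) = volume (closedBall (0 : EuclideanSpace ℝ (Fin n)) R) :=
  Measure.addHaar_closedBall_center volume x R

theorem osc_meas {n : ℕ} (u : EuclideanSpace ℝ (Fin n) → ℝ) (L : NNReal) (hu : LipschitzWith L u)
    (ρ : ℝ) : Measurable (fun x => ∫⁻ y in closedBall x ρ, ‖u y - u x‖ₑ) := by
  have h1 : ∀ x, ∫⁻ y in closedBall x ρ, ‖u y - u x‖ₑ =
      ∫⁻ h in closedBall (0 : EuclideanSpace ℝ (Fin n)) ρ, ‖u (x + h) - u x‖ₑ := by
    intro x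
    rw [← lintegral_indicator measurableSet_closedBall, ← lintegral_indicator measurableSet_closedBall,
      ← lintegral_add_left_eq_self _ x]
    congr 1
    ext h
    simp only [Set.indicator, mem_closedBall, dist_self_add_left, dist_zero_right]
  simp_rw [h1]
  have hc := hu.continuous
  have hm : Measurable (fun q : EuclideanSpace ℝ (Fin n) × EuclideanSpace ℝ (Fin n) => ‖u (q.1 + q.2) - u q.1‖ₑ) := by
    apply Continuous.measurable; fun_prop
  exact hm.lintegral_prod_right'

theorem hardy_thick1 {n : ℕ} (E : Set (EuclideanSpace ℝ (Fin n))) (hne : E.Nonempty)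
    (γ s c₀ : ℝ) (hγ : 1 < γ) (hs : s < γ) (hc₀ : 0 < c₀)
    (hthick : ∀ x ∈ E, ∀ r R : ℝ, 0 < r → r < R →
      ENNReal.ofReal (c₀ * (r / R) ^ s) * volume (Metric.closedBall x R) ≤
        volume (Metric.thickening r E ∩ Metric.closedBall x R)) :
    ∃ C : ℝ, 0 < C ∧ ∀ u : EuclideanSpace ℝ (Fin n) → ℝ, ∀ L : NNReal, LipschitzWith L u →
      ∫⁻ x, ‖u x‖ₑ * (infEDist x E) ^ (-γ) ≠ ⊤ →
      ∫⁻ x, ‖u x‖ₑ * (infEDist x E) ^ (-γ) ≤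
        ENNReal.ofReal C * ∫⁻ x, ‖fderiv ℝ u x‖ₑ * (infEDist x E) ^ (1 - γ) := by
  obtain ⟨M, hM1, hM⟩ := exists_big (2 ^ n / c₀) (γ - s) (by linarith)
  have hM0 : 0 < M := by linarith
  have hγ1 : 0 < γ - 1 := by linarith
  refine ⟨2 * (γ * (2 ^ n * 2 * (M ^ s / c₀)) * (3 ^ (γ - 1) / (γ - 1))), by positivity, fun u L hu hfin => ?_⟩
  have hum : Measurable (fun x => ‖u x‖ₑ) := hu.continuous.measurable.enorm
  refine absorb volume E (fun x => infEDist_ne_top hne) _ _ hum (measurable_fderiv ℝ u).enorm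
    γ (2 ^ n * (M ^ s / c₀)) _ M⁻¹ 3 hγ (by positivity) (by positivity) (by positivity) (by norm_num) ?_ hfin ?_
  · refine le_trans (le_of_eq ?_) hM
    rw [Real.inv_rpow hM0.le, show -(γ - s) = s - γ by ring, Real.rpow_sub hM0]
    field_simp
  intro R hR
  set r := M⁻¹ * R with hr
  have hr0 : 0 < r := by positivity
  have hrR : r < R := by
    rw [hr]; exact mul_lt_of_lt_one_left hR (inv_lt_one_of_one_lt₀ hM1)
  set V := volume (closedBall (0 : EuclideanSpace ℝ (Fin n)) R) with hV
  have hV0 : V ≠ 0 := (measure_closedBall_pos volume _ hR).ne'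
  have hVt : V ≠ ⊤ := measure_closedBall_lt_top.ne
  have hrat : (r / R) ^ s = (M ^ s)⁻¹ := by
    rw [hr, mul_div_assoc, div_self hR.ne', mul_one, Real.inv_rpow hM0.le]
  have hpt : ∀ x ∈ thickening R E, ENNReal.ofReal (c₀ * (M ^ s)⁻¹) * V * ‖u x‖ₑ ≤
      (∫⁻ y in thickening r E ∩ closedBall x (2 * R), ‖u y‖ₑ) +
        ∫⁻ y in closedBall x (2 * R), ‖u y - u x‖ₑ := by
    intro x hx
    obtain ⟨a, ha, hxa⟩ := mem_thickening_iff.1 hx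
    have h1 : ENNReal.ofReal (c₀ * (M ^ s)⁻¹) * V ≤ volume (thickening r E ∩ closedBall x (2 * R)) := by
      have := hthick a ha r R hr0 hrR
      rw [hrat, ball_center] at this
      refine this.trans (measure_mono (Set.inter_subset_inter_right _ ?_))
      exact closedBall_subset_closedBall' (by rw [dist_comm]; linarith)
    calc _ ≤ volume (thickening r E ∩ closedBall x (2 * R)) * ‖u x‖ₑ := by gcongr
      _ = ∫⁻ y in thickening r E ∩ closedBall x (2 * R), ‖u x‖ₑ := by rw [setLIntegral_const, mul_comm]
      _ ≤ ∫⁻ y in thickening r E ∩ closedBall x (2 * R), (‖u y‖ₑ + ‖u y - u x‖ₑ) := by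
        refine lintegral_mono fun y => ?_
        calc ‖u x‖ₑ = ‖u y - (u y - u x)‖ₑ := by congr 1; ring
          _ ≤ _ := enorm_sub_le
      _ = (∫⁻ y in thickening r E ∩ closedBall x (2 * R), ‖u y‖ₑ) +
          ∫⁻ y in thickening r E ∩ closedBall x (2 * R), ‖u y - u x‖ₑ := lintegral_add_left hum _
      _ ≤ _ := by
        gcongr
        exact Set.inter_subset_right
  have hV2 : ∀ y : EuclideanSpace ℝ (Fin n), volume (closedBall y (2 * R)) = ENNReal.ofReal (2 ^ n) * V :=
    fun y => ball_scale y 2 R (by norm_num)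
  have hT : MeasurableSet (thickening R E) := isOpen_thickening.measurableSet
  have hint : ENNReal.ofReal (c₀ * (M ^ s)⁻¹) * V * ∫⁻ x in thickening R E, ‖u x‖ₑ ≤
      (ENNReal.ofReal (2 ^ n) * V) * (∫⁻ x in thickening r E, ‖u x‖ₑ) +
      (ENNReal.ofReal (2 ^ n) * V) * (ENNReal.ofReal (2 * R) * ∫⁻ x in thickening (3 * R) E, ‖fderiv ℝ u x‖ₑ) := by
    rw [← lintegral_const_mul _ hum]
    calc _ ≤ ∫⁻ x in thickening R E, ((∫⁻ y in thickening r E ∩ closedBall x (2 * R), ‖u y‖ₑ) +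
        ∫⁻ y in closedBall x (2 * R), ‖u y - u x‖ₑ) := setLIntegral_mono' hT hpt
      _ ≤ (∫⁻ x in thickening R E, ∫⁻ y in thickening r E ∩ closedBall x (2 * R), ‖u y‖ₑ) +
        ∫⁻ x in thickening R E, ∫⁻ y in closedBall x (2 * R), ‖u y - u x‖ₑ := by
          refine le_of_eq (lintegral_add_right _ (osc_meas u L hu _))
      _ ≤ _ := by
        gcongr
        · rw [swap_ball _ _ _ _ hum, ← lintegral_const_mul _ hum]
          refine lintegral_mono fun y => ?_
          rw [mul_comm, ← hV2 y]
          gcongr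
          exact Set.inter_subset_right
        · have := osc_bound u L hu (2 * R) R E
          rwa [hV2, show R + 2 * R = 3 * R by ring] at this
  have hinv : V⁻¹ * V = 1 := ENNReal.inv_mul_cancel hV0 hVt
  calc ∫⁻ x in thickening R E, ‖u x‖ₑ = (ENNReal.ofReal (M ^ s / c₀) * V⁻¹) *
      (ENNReal.ofReal (c₀ * (M ^ s)⁻¹) * V * ∫⁻ x in thickening R E, ‖u x‖ₑ) := by
        rw [← mul_assoc, mul_mul_mul_comm, hinv, ← ENNReal.ofReal_mul (by positivity),
          show M ^ s / c₀ * (c₀ * (M ^ s)⁻¹) = 1 by field_simp]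
        simp
    _ ≤ _ := mul_le_mul_right hint _
    _ = ENNReal.ofReal (M ^ s / c₀) * ENNReal.ofReal (2 ^ n) * (V⁻¹ * V) * (∫⁻ x in thickening r E, ‖u x‖ₑ) +
       ENNReal.ofReal (M ^ s / c₀) * ENNReal.ofReal (2 ^ n) * ENNReal.ofReal (2 * R) * (V⁻¹ * V) *
         ∫⁻ x in thickening (3 * R) E, ‖fderiv ℝ u x‖ₑ := by ring
    _ = _ := by
      rw [hinv, mul_one, mul_one, ← ENNReal.ofReal_mul (by positivity), ← ENNReal.ofReal_mul (by positivity)]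
      congr 3 <;> ring_nf



theorem hardy_thin1 {n : ℕ} (F : Set (EuclideanSpace ℝ (Fin n))) (hne : F.Nonempty)
    (γ t C_A : ℝ) (hγ : 1 < γ) (ht : γ < t) (hCA : 1 ≤ C_A)
    (hthin : ∀ x ∈ F, ∀ r R : ℝ, 0 < r → r < R →
      volume (Metric.thickening r F ∩ Metric.closedBall x R) ≤
        ENNReal.ofReal (C_A * (r / R) ^ t) * volume (Metric.closedBall x R)) :
    ∃ C : ℝ, 0 < C ∧ ∀ u : EuclideanSpace ℝ (Fin n) → ℝ, ∀ L : NNReal, LipschitzWith L u →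
      ∫⁻ x, ‖u x‖ₑ * (infEDist x F) ^ (-γ) ≠ ⊤ →
      ∫⁻ x, ‖u x‖ₑ * (infEDist x F) ^ (-γ) ≤
        ENNReal.ofReal C * ∫⁻ x, ‖fderiv ℝ u x‖ₑ * (infEDist x F) ^ (1 - γ) := by
  obtain ⟨M, hM1, hM⟩ := exists_big (C_A * 3 ^ n * 2 ^ γ) (t - γ) (by linarith)
  have hM0 : 0 < M := by linarith
  have hγ1 : 0 < γ - 1 := by linarith
  have hC0 : 0 < C_A := by linarith
  refine ⟨2 * (γ * M * ((2 * M) ^ (γ - 1) / (γ - 1))), by positivity, fun u L hu hfin => ?_⟩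
  have hum : Measurable (fun x => ‖u x‖ₑ) := hu.continuous.measurable.enorm
  refine absorb volume F (fun x => infEDist_ne_top hne) _ _ hum (measurable_fderiv ℝ u).enorm
    γ (C_A * M ^ (-t) * 3 ^ n) _ (2 * M) (2 * M) hγ (by positivity) (by positivity) (by positivity) (by positivity) ?_ hfin ?_
  · refine le_trans (le_of_eq ?_) hM
    rw [Real.mul_rpow (by norm_num) hM0.le, show -(t - γ) = -t + γ by ring, Real.rpow_add hM0]
    ring
  intro r hr0
  set R := M * r with hR
  have hR0 : 0 < R := by positivity
  have hrR : r < R := by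
    rw [hR]; exact lt_mul_of_one_lt_left hr0 hM1
  set V := volume (closedBall (0 : EuclideanSpace ℝ (Fin n)) R) with hV
  have hV0 : V ≠ 0 := (measure_closedBall_pos volume _ hR0).ne'
  have hVt : V ≠ ⊤ := measure_closedBall_lt_top.ne
  have hpt : ∀ x ∈ thickening r F, V * ‖u x‖ₑ ≤
      (∫⁻ y in thickening (2 * R) F ∩ closedBall x R, ‖u y‖ₑ) +
        ∫⁻ y in closedBall x R, ‖u y - u x‖ₑ := by
    intro x hx
    obtain ⟨a, ha, hxa⟩ := mem_thickening_iff.1 hx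
    have hsub : closedBall x R ⊆ thickening (2 * R) F := by
      intro y hy
      refine mem_thickening_iff.2 ⟨a, ha, ?_⟩
      have := mem_closedBall.1 hy
      linarith [dist_triangle y x a]
    rw [Set.inter_eq_right.2 hsub]
    calc V * ‖u x‖ₑ = ∫⁻ y in closedBall x R, ‖u x‖ₑ := by rw [setLIntegral_const, mul_comm, ball_center]
      _ ≤ ∫⁻ y in closedBall x R, (‖u y‖ₑ + ‖u y - u x‖ₑ) := by
        refine lintegral_mono fun y => ?_
        calc ‖u x‖ₑ = ‖u y - (u y - u x)‖ₑ := by congr 1; ring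
          _ ≤ _ := enorm_sub_le
      _ = _ := lintegral_add_left hum _
  have hT : MeasurableSet (thickening r F) := isOpen_thickening.measurableSet
  have hvol : ∀ y ∈ thickening (2 * R) F, volume (thickening r F ∩ closedBall y R) ≤
      ENNReal.ofReal (C_A * M ^ (-t) * 3 ^ n) * V := by
    intro y hy
    obtain ⟨a, ha, hya⟩ := mem_thickening_iff.1 hy
    calc _ ≤ volume (thickening r F ∩ closedBall a (3 * R)) := by
          refine measure_mono (Set.inter_subset_inter_right _ ?_)
          exact closedBall_subset_closedBall' (by linarith)
      _ ≤ _ := hthin a ha r (3 * R) hr0 (by linarith)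
      _ = ENNReal.ofReal (C_A * (r / (3 * R)) ^ t * 3 ^ n) * V := by
          rw [ball_scale a 3 R (by norm_num), ← mul_assoc, ← ENNReal.ofReal_mul (by positivity)]
      _ ≤ _ := by
          gcongr
          rw [Real.rpow_neg hM0.le, ← Real.inv_rpow hM0.le]
          refine Real.rpow_le_rpow (by positivity) ?_ (by linarith)
          rw [hR, inv_eq_one_div, div_le_div_iff₀ (by positivity) (by positivity)]
          nlinarith [mul_pos hM0 hr0]
  have hint : V * ∫⁻ x in thickening r F, ‖u x‖ₑ ≤
      (ENNReal.ofReal (C_A * M ^ (-t) * 3 ^ n) * V) * (∫⁻ x in thickening (2 * R) F, ‖u x‖ₑ) +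
      V * (ENNReal.ofReal R * ∫⁻ x in thickening (2 * R) F, ‖fderiv ℝ u x‖ₑ) := by
    rw [← lintegral_const_mul _ hum]
    calc _ ≤ ∫⁻ x in thickening r F, ((∫⁻ y in thickening (2 * R) F ∩ closedBall x R, ‖u y‖ₑ) +
        ∫⁻ y in closedBall x R, ‖u y - u x‖ₑ) := setLIntegral_mono' hT hpt
      _ ≤ (∫⁻ x in thickening r F, ∫⁻ y in thickening (2 * R) F ∩ closedBall x R, ‖u y‖ₑ) +
        ∫⁻ x in thickening r F, ∫⁻ y in closedBall x R, ‖u y - u x‖ₑ := 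
          le_of_eq (lintegral_add_right _ (osc_meas u L hu _))
      _ ≤ _ := by
        refine add_le_add ?_ ?_
        · rw [swap_ball _ _ _ _ hum, ← lintegral_const_mul _ hum]
          refine setLIntegral_mono' isOpen_thickening.measurableSet fun y hy => ?_
          rw [mul_comm]
          exact mul_le_mul_left (hvol y hy) _
        · refine (osc_bound u L hu R r F).trans ?_
          refine mul_le_mul_right (mul_le_mul_right (lintegral_mono_set (thickening_mono ?_ _)) _) _
          linarith
  have hinv : V⁻¹ * V = 1 := ENNReal.inv_mul_cancel hV0 hVt
  rw [show 2 * M * r = 2 * R by rw [hR]; ring]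
  calc ∫⁻ x in thickening r F, ‖u x‖ₑ = V⁻¹ * (V * ∫⁻ x in thickening r F, ‖u x‖ₑ) := by
        rw [← mul_assoc, hinv, one_mul]
    _ ≤ _ := mul_le_mul_right hint _
    _ = ENNReal.ofReal (C_A * M ^ (-t) * 3 ^ n) * (V⁻¹ * V) * (∫⁻ x in thickening (2 * R) F, ‖u x‖ₑ) +
       ENNReal.ofReal R * (V⁻¹ * V) * ∫⁻ x in thickening (2 * R) F, ‖fderiv ℝ u x‖ₑ := by ring
    _ = _ := by
      rw [hinv, mul_one, mul_one]

theorem fin_thin {n : ℕ} (F : Set (EuclideanSpace ℝ (Fin n))) 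
    (γ t C_A : ℝ) (hγ : 0 < γ) (ht : γ < t) (hCA : 1 ≤ C_A)
    (hthin : ∀ x ∈ F, ∀ r R : ℝ, 0 < r → r < R →
      volume (Metric.thickening r F ∩ Metric.closedBall x R) ≤
        ENNReal.ofReal (C_A * (r / R) ^ t) * volume (Metric.closedBall x R))
    (a : EuclideanSpace ℝ (Fin n)) (ha : a ∈ F) (R : ℝ) (hR : 0 < R) :
    ∫⁻ x in closedBall a R, (infEDist x F) ^ (-γ) ≠ ⊤ := by
  have hl := layer_cake (volume.restrict (closedBall a R)) F (fun x => infEDist_ne_top ⟨a, ha⟩)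
    (fun _ => 1) measurable_const γ 1 hγ one_pos
  simp only [one_mul, setLIntegral_const, Real.one_rpow] at hl
  have hfin : ∫⁻ r in Set.Ioi (0:ℝ), ENNReal.ofReal (r ^ (-γ-1)) * (volume.restrict (closedBall a R)) (thickening r F) ≠ ⊤ := by
    have hV : volume (closedBall a R) ≠ ⊤ := measure_closedBall_lt_top.ne
    have h1 : ∫⁻ r in Set.Ioo (0:ℝ) R, ENNReal.ofReal (r ^ (-γ-1)) * (volume.restrict (closedBall a R)) (thickening r F) ≠ ⊤ := by
      have hint : IntegrableOn (fun r : ℝ => r ^ (t - γ - 1)) (Set.Ioo 0 R) := by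
        rw [← integrableOn_Ioc_iff_integrableOn_Ioo]
        exact (intervalIntegrable_iff_integrableOn_Ioc_of_le hR.le).1
          (intervalIntegral.intervalIntegrable_rpow' (by linarith))
      refine ne_top_of_le_ne_top (b := ∫⁻ r in Set.Ioo (0:ℝ) R, 
        (ENNReal.ofReal (C_A * (R ^ t)⁻¹) * volume (closedBall a R)) * ENNReal.ofReal (r ^ (t - γ - 1))) ?_ ?_
      · have hm : Measurable (fun r : ℝ => ENNReal.ofReal (r ^ (t - γ - 1))) := (measurable_id.pow_const _).ennreal_ofReal
        rw [lintegral_const_mul _ hm]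
        refine ENNReal.mul_ne_top (ENNReal.mul_ne_top ofReal_ne_top hV) ?_
        exact hint.lintegral_lt_top.ne
      · refine setLIntegral_mono' measurableSet_Ioo fun r hr => ?_
        have hr0 : 0 < r := hr.1
        rw [Measure.restrict_apply isOpen_thickening.measurableSet]
        refine (mul_le_mul_right (hthin a ha r R hr.1 hr.2) _).trans (le_of_eq ?_)
        rw [← mul_assoc, ← ENNReal.ofReal_mul (by positivity), mul_right_comm, ← ENNReal.ofReal_mul (by positivity)]
        congr 2
        rw [Real.div_rpow hr0.le hR.le, show t - γ - 1 = (-γ - 1) + t by ring, Real.rpow_add hr0]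
        field_simp
    have h2 : ∫⁻ r in Set.Ici R, ENNReal.ofReal (r ^ (-γ-1)) * (volume.restrict (closedBall a R)) (thickening r F) ≠ ⊤ := by
      have hint : IntegrableOn (fun r : ℝ => r ^ (-γ - 1)) (Set.Ici R) := by
        rw [integrableOn_Ici_iff_integrableOn_Ioi]
        exact integrableOn_Ioi_rpow_of_lt (by linarith) hR
      refine ne_top_of_le_ne_top (b := ∫⁻ r in Set.Ici R, 
        (volume (closedBall a R)) * ENNReal.ofReal (r ^ (-γ - 1))) ?_ ?_
      · have hm : Measurable (fun r : ℝ => ENNReal.ofReal (r ^ (-γ - 1))) := (measurable_id.pow_const _).ennreal_ofReal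
        rw [lintegral_const_mul _ hm]
        refine ENNReal.mul_ne_top hV ?_
        exact hint.lintegral_lt_top.ne
      · refine lintegral_mono fun r => ?_
        rw [mul_comm]
        refine mul_le_mul_left ?_ _
        rw [Measure.restrict_apply isOpen_thickening.measurableSet]
        exact measure_mono Set.inter_subset_right
    refine ne_top_of_le_ne_top (ENNReal.add_ne_top.2 ⟨h1, h2⟩) ?_
    refine le_trans (lintegral_mono_set ?_) (lintegral_union_le _ _ _)
    intro r hr
    rcases lt_or_ge r R with h | h
    · exact Or.inl ⟨hr, h⟩
    · exact Or.inr h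
  rw [hl] at hfin
  intro htop
  rw [htop, ENNReal.mul_top (by simp; positivity)] at hfin
  exact hfin rfl


theorem thin_null {n : ℕ} (F : Set (EuclideanSpace ℝ (Fin n))) 
    (γ t C_A : ℝ) (hγ : 0 < γ) (ht : γ < t) (hCA : 1 ≤ C_A)
    (hthin : ∀ x ∈ F, ∀ r R : ℝ, 0 < r → r < R →
      volume (Metric.thickening r F ∩ Metric.closedBall x R) ≤
        ENNReal.ofReal (C_A * (r / R) ^ t) * volume (Metric.closedBall x R))
    (a : EuclideanSpace ℝ (Fin n)) (ha : a ∈ F) : ∀ᵐ x : EuclideanSpace ℝ (Fin n), x ∉ F := by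
  have h : ∀ k : ℕ, ∀ᵐ x : EuclideanSpace ℝ (Fin n), x ∈ closedBall a (k + 1) → x ∉ F := by
    intro k
    have hfin := fin_thin F γ t C_A hγ ht hCA hthin a ha (k + 1) (by positivity)
    rw [← ae_restrict_iff' measurableSet_closedBall]
    filter_upwards [ae_lt_top (measurable_infEDist.pow_const _) hfin] with x hx hxF
    rw [infEDist_zero_of_mem hxF, ENNReal.zero_rpow_of_neg (by linarith)] at hx
    exact lt_irrefl _ hx
  rw [← ae_all_iff] at h
  filter_upwards [h] with x hx
  obtain ⟨k, hk⟩ := exists_nat_ge (dist x a)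
  exact hx k (mem_closedBall.2 (by linarith))

theorem fin_F {n : ℕ} (F : Set (EuclideanSpace ℝ (Fin n))) 
    (γ t C_A : ℝ) (hγ : 0 < γ) (ht : γ < t) (hCA : 1 ≤ C_A)
    (hthin : ∀ x ∈ F, ∀ r R : ℝ, 0 < r → r < R →
      volume (Metric.thickening r F ∩ Metric.closedBall x R) ≤
        ENNReal.ofReal (C_A * (r / R) ^ t) * volume (Metric.closedBall x R))
    (a : EuclideanSpace ℝ (Fin n)) (ha : a ∈ F) (v : EuclideanSpace ℝ (Fin n) → ℝ) (hv : Continuous v)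
    (hc : HasCompactSupport v) : ∫⁻ x, ‖v x‖ₑ * (infEDist x F) ^ (-γ) ≠ ⊤ := by
  obtain ⟨B, hB⟩ := hc.exists_bound_of_continuous hv
  obtain ⟨R, hR0, hR⟩ := hc.isCompact.isBounded.subset_closedBall_lt 0 a
  have hfin := fin_thin F γ t C_A hγ ht hCA hthin a ha R hR0
  have hm : Measurable (fun x => infEDist x F ^ (-γ)) := measurable_infEDist.pow_const _
  refine ne_top_of_le_ne_top (ENNReal.mul_ne_top (ofReal_ne_top (r := B)) hfin) ?_
  rw [← lintegral_indicator measurableSet_closedBall,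
    ← lintegral_const_mul _ (hm.indicator measurableSet_closedBall)]
  refine lintegral_mono fun x => ?_
  by_cases hx : x ∈ closedBall a R
  · rw [Set.indicator_of_mem hx]
    refine mul_le_mul_left ?_ _
    rw [← ofReal_norm]
    exact ENNReal.ofReal_le_ofReal (hB x)
  · rw [image_eq_zero_of_notMem_tsupport (fun h => hx (hR h))]
    simp

theorem fin_A {n : ℕ} (A : Set (EuclideanSpace ℝ (Fin n))) (hA : IsClosed A)
    (γ : ℝ) (hγ : 0 < γ) (v : EuclideanSpace ℝ (Fin n) → ℝ) (hv : Continuous v)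
    (hc : HasCompactSupport v) (hd : Disjoint (tsupport v) A) :
    ∫⁻ x, ‖v x‖ₑ * (infEDist x A) ^ (-γ) ≠ ⊤ := by
  obtain ⟨δ, hδ, h⟩ := exists_pos_forall_lt_edist hc.isCompact hA hd
  have hi := (hv.integrable_of_hasCompactSupport hc (μ := volume)).2
  have hδ' : ((δ:ℝ≥0∞) ^ (-γ)) ≠ ⊤ := by
    simp [ENNReal.rpow_eq_top_iff, hδ.ne']
  refine ne_top_of_le_ne_top (ENNReal.mul_ne_top hδ' hi.ne) ?_
  rw [← lintegral_const_mul _ hv.measurable.enorm]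
  refine lintegral_mono fun x => ?_
  by_cases hx : x ∈ tsupport v
  · rw [mul_comm]
    refine mul_le_mul_left ?_ _
    rw [ENNReal.rpow_neg, ENNReal.rpow_neg]
    refine ENNReal.inv_le_inv.2 (ENNReal.rpow_le_rpow ?_ hγ.le)
    exact le_infEDist.2 fun y hy => (h x hx y hy).le
  · rw [image_eq_zero_of_notMem_tsupport hx]
    simp

theorem lip_pow {X : Type*} [PseudoMetricSpace X] (u : X → ℝ) (L : NNReal) (hu : LipschitzWith L u) (B p : ℝ)
    (hB : ∀ x, ‖u x‖ ≤ B) (hp : 1 < p) : ∃ L' : NNReal, LipschitzWith L' (fun x => |u x| ^ p) := by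
  have hcd : ContDiff ℝ 1 (fun x : ℝ => ‖x‖ ^ p) := contDiff_norm_rpow hp
  obtain ⟨K, hK⟩ := hcd.contDiffOn.exists_lipschitzOnWith (s := closedBall (0:ℝ) B) one_ne_zero
    (convex_closedBall _ _) (isCompact_closedBall _ _)
  refine ⟨K * L, ?_⟩
  rw [← lipschitzOnWith_univ]
  exact hK.comp hu.lipschitzOnWith (fun x _ => by simpa using hB x)

theorem enorm_fderiv_abs_rpow {n : ℕ} (u : EuclideanSpace ℝ (Fin n) → ℝ) (p : ℝ) (hp : 1 < p) (x : EuclideanSpace ℝ (Fin n))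
    (hx : DifferentiableAt ℝ u x) :
    ‖fderiv ℝ (fun x => |u x| ^ p) x‖ₑ ≤ ENNReal.ofReal p * (‖u x‖ₑ ^ (p - 1) * ‖fderiv ℝ u x‖ₑ) := by
  have h := (hasDerivAt_abs_rpow (u x) hp).comp_hasFDerivAt x hx.hasFDerivAt
  have h' : HasFDerivAt (fun x => |u x| ^ p) _ x := h
  rw [h'.fderiv, enorm_smul, ← mul_assoc]
  refine mul_le_mul_left ?_ _
  rw [← ofReal_norm, ← ofReal_norm, ENNReal.ofReal_rpow_of_nonneg (norm_nonneg _) (by linarith),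
    ← ENNReal.ofReal_mul (by linarith)]
  refine ENNReal.ofReal_le_ofReal ?_
  rw [norm_mul, norm_mul, Real.norm_of_nonneg (by linarith : 0 ≤ p), Real.norm_of_nonneg (by positivity), mul_assoc]
  refine mul_le_mul_of_nonneg_left (le_of_eq ?_) (by linarith)
  rcases eq_or_ne (u x) 0 with h0 | h0
  · rw [h0]; simp; rw [Real.zero_rpow (by linarith)]
  · rw [← Real.norm_eq_abs, ← Real.rpow_add_one (norm_ne_zero_iff.2 h0)]
    congr 1; ring

theorem absorb_holder (X Y D : ℝ≥0∞) (p q : ℝ) (hpq : p.HolderConjugate q) (hX : X ≠ ⊤) 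
    (h : X ≤ D * (X ^ (1 / q) * Y ^ (1 / p))) : X ≤ D ^ p * Y := by
  have hp := hpq.pos
  rcases eq_or_ne X 0 with rfl | h0
  · exact zero_le
  have hXq0 : X ^ (1/q) ≠ 0 := by simp [ENNReal.rpow_eq_zero_iff, h0, hX]
  have hXqt : X ^ (1/q) ≠ ⊤ := by simp [ENNReal.rpow_eq_top_iff, h0, hX]
  have hsum : 1 / q + 1 / p = 1 := by
    have := hpq.inv_add_inv_eq_one; simp only [one_div]; linarith
  have e : X = X ^ (1/q) * X ^ (1/p) := by
    rw [← ENNReal.rpow_add _ _ h0 hX, hsum, ENNReal.rpow_one]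
  have h1 : X ^ (1/q) * X ^ (1/p) ≤ X ^ (1/q) * (D * Y ^ (1/p)) := by
    rw [← e]; refine h.trans (le_of_eq ?_); ring
  have h2 := (ENNReal.mul_le_mul_iff_right hXq0 hXqt).1 h1
  have h3 := ENNReal.rpow_le_rpow h2 hp.le
  rwa [ENNReal.mul_rpow_of_nonneg _ _ hp.le, ← ENNReal.rpow_mul, ← ENNReal.rpow_mul,
    one_div_mul_cancel hp.ne', ENNReal.rpow_one, ENNReal.rpow_one] at h3


/-- (Corollary 7.2 of the paper.) Combining a thick and a thin part of
the complement: if `Ω₀ᶜ` is unbounded with upper Assouad codimension `< p - β` and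
`F ⊆ closure Ω₀` is a nonempty closed set with lower Assouad codimension `> p - β`, then
`Ω = Ω₀ \ F` admits a `(p,β)`-Hardy inequality for all Lipschitz test functions with
compact support in `Ω₀` (not required to vanish on `F ∩ Ω₀`). -/
theorem hardy_thick_and_thin
    (n : ℕ) (hn : 1 ≤ n) (p β : ℝ) (hp : 1 < p) (hβ : β < p - 1)
    (Ω₀ : Set (EuclideanSpace ℝ (Fin n))) (hΩ₀open : IsOpen Ω₀) (hΩ₀c : Ω₀ᶜ.Nonempty)
    (hΩ₀cUnb : ¬ Bornology.IsBounded Ω₀ᶜ)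
    (s c₀ : ℝ) (hs0 : 0 ≤ s) (hs : s < p - β) (hc₀ : 0 < c₀)
    (hthick : ∀ x ∈ Ω₀ᶜ, ∀ r R : ℝ, 0 < r → r < R →
      ENNReal.ofReal (c₀ * (r / R) ^ s) * volume (Metric.closedBall x R) ≤
        volume (Metric.thickening r Ω₀ᶜ ∩ Metric.closedBall x R))
    (F : Set (EuclideanSpace ℝ (Fin n))) (hF : IsClosed F) (hFne : F.Nonempty)
    (hFsub : F ⊆ closure Ω₀)
    (t C_A : ℝ) (ht : p - β < t) (hCA : 1 ≤ C_A)
    (hthin : ∀ x ∈ F, ∀ r R : ℝ, 0 < r → r < R →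
      volume (Metric.thickening r F ∩ Metric.closedBall x R) ≤
        ENNReal.ofReal (C_A * (r / R) ^ t) * volume (Metric.closedBall x R)) :
    ∃ C : ℝ, 0 < C ∧ ∀ u : EuclideanSpace ℝ (Fin n) → ℝ,
      (∃ L : NNReal, LipschitzWith L u) → HasCompactSupport u → tsupport u ⊆ Ω₀ →
      ∫⁻ x in Ω₀ \ F,
          ENNReal.ofReal (|u x| ^ p * Metric.infDist x (Ω₀ \ F)ᶜ ^ (β - p)) ≤
        ENNReal.ofReal C *
          ∫⁻ x in Ω₀ \ F,
            ENNReal.ofReal (‖fderiv ℝ u x‖ ^ p * Metric.infDist x (Ω₀ \ F)ᶜ ^ β) := by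
  obtain ⟨γ, hγdef⟩ : ∃ γ, γ = p - β := ⟨_, rfl⟩
  have hγ : 1 < γ := by linarith
  have hγ0 : 0 < γ := by linarith
  have hp0 : 0 < p := by linarith
  obtain ⟨a, ha⟩ := hFne
  obtain ⟨C1, hC1, H1⟩ := hardy_thick1 Ω₀ᶜ hΩ₀c γ s c₀ hγ (by linarith) hc₀ hthick
  obtain ⟨C2, hC2, H2⟩ := hardy_thin1 F ⟨a, ha⟩ γ t C_A hγ (by linarith) hCA hthin
  have hnull := thin_null F γ t C_A hγ0 (by linarith) hCA hthin a ha
  refine ⟨((C1 + C2) * p) ^ p, by positivity, ?_⟩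
  rintro u ⟨L, hu⟩ hcs hsupp
  obtain ⟨B, hB⟩ := hcs.exists_bound_of_continuous hu.continuous
  obtain ⟨L', hv⟩ := lip_pow u L hu B p hB hp
  set v : EuclideanSpace ℝ (Fin n) → ℝ := fun x => |u x| ^ p with hvdef
  have hvsub : tsupport v ⊆ tsupport u := by
    refine closure_mono fun x hx hux => hx ?_
    simp only [hvdef]
    rw [hux, abs_zero, Real.zero_rpow hp0.ne']
  have hvc : HasCompactSupport v := hcs.isCompact.of_isClosed_subset (isClosed_tsupport v) hvsub
  have hvd : Disjoint (tsupport v) Ω₀ᶜ :=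
    Set.disjoint_left.2 fun x hx hx' => hx' (hsupp (hvsub hx))
  have hfA := fin_A Ω₀ᶜ hΩ₀open.isClosed_compl γ hγ0 v hv.continuous hvc hvd
  have hfF := fin_F F γ t C_A hγ0 (by linarith) hCA hthin a ha v hv.continuous hvc
  have K1 := H1 v L' hv hfA
  have K2 := H2 v L' hv hfF
  have hcompl : (Ω₀ \ F)ᶜ = Ω₀ᶜ ∪ F := by
    rw [Set.sdiff_eq, Set.compl_inter, compl_compl]
  set W : EuclideanSpace ℝ (Fin n) → ℝ≥0∞ := fun x => infEDist x (Ω₀ \ F)ᶜ with hW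
  have hWm : Measurable W := measurable_infEDist
  have hWmin : ∀ x, W x = min (infEDist x Ω₀ᶜ) (infEDist x F) := by
    intro x; simp only [hW]; rw [hcompl, infEDist_union]
  have hΩm : MeasurableSet (Ω₀ \ F) := hΩ₀open.measurableSet.diff hF.measurableSet
  have hcl : IsClosed (Ω₀ \ F)ᶜ := by
    rw [hcompl]; exact hΩ₀open.isClosed_compl.union hF
  have hcne : ((Ω₀ \ F)ᶜ).Nonempty := by
    rw [hcompl]; exact ⟨a, Or.inr ha⟩
  have hWt : ∀ x, W x ≠ ⊤ := fun x => infEDist_ne_top hcne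
  have hW0 : ∀ x ∈ Ω₀ \ F, W x ≠ 0 := by
    intro x hx h0
    have := (mem_iff_infEDist_zero_of_closed hcl).2 h0
    exact this hx
  have hvm : Measurable (fun x => ‖v x‖ₑ) := hv.continuous.measurable.enorm
  have hum : Measurable (fun x => ‖u x‖ₑ) := hu.continuous.measurable.enorm
  have hdu : Measurable (fun x => ‖fderiv ℝ u x‖ₑ) := (measurable_fderiv ℝ u).enorm
  have hanti : ∀ (b c : ℝ≥0∞) (y : ℝ), y ≤ 0 → b ≤ c → c ^ y ≤ b ^ y := by
    intro b c y hy hbc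
    rw [← neg_neg y, ENNReal.rpow_neg, ENNReal.rpow_neg b]
    exact ENNReal.inv_le_inv.2 (ENNReal.rpow_le_rpow hbc (by linarith))
  set X := ∫⁻ x in Ω₀ \ F, ‖v x‖ₑ * W x ^ (-γ) with hX
  set Y := ∫⁻ x in Ω₀ \ F, (‖fderiv ℝ u x‖ₑ * W x ^ (β / p)) ^ p with hY
  have hXle : X ≤ (∫⁻ x, ‖v x‖ₑ * (infEDist x Ω₀ᶜ) ^ (-γ)) + ∫⁻ x, ‖v x‖ₑ * (infEDist x F) ^ (-γ) := by
    have hmA : Measurable (fun x => ‖v x‖ₑ * (infEDist x Ω₀ᶜ) ^ (-γ)) := hvm.mul (measurable_infEDist.pow_const _)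
    rw [← lintegral_add_left hmA]
    refine (setLIntegral_le_lintegral _ _).trans (lintegral_mono fun x => ?_)
    rw [← mul_add, hWmin]
    refine mul_le_mul_right ?_ _
    rcases min_choice (infEDist x Ω₀ᶜ) (infEDist x F) with h | h
    · rw [h]; exact le_self_add
    · rw [h]; exact le_add_self
  have hXt : X ≠ ⊤ := ne_top_of_le_ne_top (ENNReal.add_ne_top.2 ⟨hfA, hfF⟩) hXle
  have hG : ∀ d : EuclideanSpace ℝ (Fin n) → ℝ≥0∞, (∀ x, W x ≤ d x) →
      ∫⁻ x, ‖fderiv ℝ v x‖ₑ * d x ^ (1 - γ) ≤ ∫⁻ x in Ω₀ \ F, ‖fderiv ℝ v x‖ₑ * W x ^ (1 - γ) := by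
    intro d hd
    rw [← lintegral_indicator hΩm]
    refine lintegral_mono_ae ?_
    filter_upwards [hnull] with x hxF
    by_cases hx : x ∈ Ω₀
    · rw [Set.indicator_of_mem (show x ∈ Ω₀ \ F from ⟨hx, hxF⟩)]
      exact mul_le_mul_right (hanti _ _ _ (by linarith) (hd x)) _
    · have : x ∉ tsupport v := fun h => hx (hsupp (hvsub h))
      have h0 : fderiv ℝ v x = 0 := by
        rw [(notMem_tsupport_iff_eventuallyEq.1 this).fderiv_eq]
        simp
      have h1 : ‖fderiv ℝ v x‖ₑ = 0 := by rw [← ofReal_norm, h0, norm_zero, ENNReal.ofReal_zero]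
      rw [h1, zero_mul]; exact zero_le
  have hpq : p.HolderConjugate (p / (p - 1)) := Real.HolderConjugate.conjExponent hp
  set q := p / (p - 1) with hq
  have hp1 : p - 1 ≠ 0 := by linarith
  have hHolder : ∫⁻ x in Ω₀ \ F, ‖fderiv ℝ v x‖ₑ * W x ^ (1 - γ) ≤ ENNReal.ofReal p * (X ^ (1 / q) * Y ^ (1 / p)) := by
    have hm1 : Measurable (fun x => ‖u x‖ₑ ^ (p - 1) * W x ^ (-γ * (p - 1) / p)) :=
      (hum.pow_const _).mul (hWm.pow_const _)
    have hm2 : Measurable (fun x => ‖fderiv ℝ u x‖ₑ * W x ^ (β / p)) := hdu.mul (hWm.pow_const _)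
    calc _ ≤ ∫⁻ x in Ω₀ \ F, ENNReal.ofReal p * (((fun x => ‖u x‖ₑ ^ (p - 1) * W x ^ (-γ * (p - 1) / p)) * 
            (fun x => ‖fderiv ℝ u x‖ₑ * W x ^ (β / p))) x) := by
          refine setLIntegral_mono_ae' hΩm ?_
          filter_upwards [hu.ae_differentiableAt (μ := volume)] with x hx hxΩ
          have h1 := enorm_fderiv_abs_rpow u p hp x hx
          refine (mul_le_mul_left h1 _).trans (le_of_eq ?_)
          simp only [Pi.mul_apply]
          have : W x ^ (1 - γ) = W x ^ (-γ * (p - 1) / p) * W x ^ (β / p) := by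
            rw [← ENNReal.rpow_add _ _ (hW0 x hxΩ) (hWt x)]
            congr 1
            field_simp
            rw [hγdef]; ring
          rw [this]; ring
      _ = ENNReal.ofReal p * ∫⁻ x in Ω₀ \ F, (((fun x => ‖u x‖ₑ ^ (p - 1) * W x ^ (-γ * (p - 1) / p)) * 
            (fun x => ‖fderiv ℝ u x‖ₑ * W x ^ (β / p))) x) := lintegral_const_mul _ (hm1.mul hm2)
      _ ≤ _ := by
          refine mul_le_mul_right ?_ _
          refine (ENNReal.lintegral_mul_le_Lp_mul_Lq _ hpq.symm hm1.aemeasurable hm2.aemeasurable).trans (le_of_eq ?_)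
          congr 2
          refine lintegral_congr fun x => ?_
          rw [ENNReal.mul_rpow_of_nonneg _ _ hpq.symm.nonneg, ← ENNReal.rpow_mul, ← ENNReal.rpow_mul]
          have e1 : (p - 1) * q = p := by rw [hq]; field_simp
          have e2 : -γ * (p - 1) / p * q = -γ := by rw [hq]; field_simp
          rw [e1, e2]
          congr 1
          simp only [hvdef]
          rw [← ofReal_norm, ← ofReal_norm, ENNReal.ofReal_rpow_of_nonneg (norm_nonneg _) hp0.le,
            Real.norm_of_nonneg (by positivity : 0 ≤ |u x| ^ p), Real.norm_eq_abs]
  have hfinal : X ≤ ENNReal.ofReal ((C1 + C2) * p) ^ p * Y := by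
    refine absorb_holder X Y _ p q hpq hXt ?_
    calc X ≤ _ := hXle
      _ ≤ _ := add_le_add K1 K2
      _ ≤ ENNReal.ofReal C1 * (ENNReal.ofReal p * (X ^ (1 / q) * Y ^ (1 / p))) +
          ENNReal.ofReal C2 * (ENNReal.ofReal p * (X ^ (1 / q) * Y ^ (1 / p))) := by
          refine add_le_add (mul_le_mul_right ((hG _ fun x => ?_).trans hHolder) _)
            (mul_le_mul_right ((hG _ fun x => ?_).trans hHolder) _)
          · rw [hWmin]; exact min_le_left _ _
          · rw [hWmin]; exact min_le_right _ _
      _ = _ := by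
          rw [← add_mul, ← ENNReal.ofReal_add hC1.le hC2.le, ← mul_assoc, ← ENNReal.ofReal_mul (by positivity)]
  have hWr : ∀ x ∈ Ω₀ \ F, ∀ y : ℝ, ENNReal.ofReal (infDist x (Ω₀ \ F)ᶜ ^ y) = W x ^ y := by
    intro x hx y
    have hpos : 0 < infDist x (Ω₀ \ F)ᶜ := ENNReal.toReal_pos (hW0 x hx) (hWt x)
    rw [← ENNReal.ofReal_rpow_of_pos hpos]
    congr 1
    exact ENNReal.ofReal_toReal (hWt x)
  calc _ = X := by
        refine setLIntegral_congr_fun hΩm fun x hx => ?_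
        rw [ENNReal.ofReal_mul (by positivity), hWr x hx]
        rw [show β - p = -γ by linarith, ← ofReal_norm (v x)]
        simp only [hvdef]
        rw [Real.norm_of_nonneg (by positivity : 0 ≤ |u x| ^ p)]
    _ ≤ _ := hfinal
    _ = _ := by
        rw [ENNReal.ofReal_rpow_of_nonneg (by positivity) hp0.le]
        congr 1
        refine setLIntegral_congr_fun hΩm fun x hx => ?_
        rw [ENNReal.ofReal_mul (by positivity), hWr x hx, ENNReal.mul_rpow_of_nonneg _ _ hp0.le,
          ← ENNReal.rpow_mul, div_mul_cancel₀ _ hp0.ne', ← ofReal_norm,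
          ENNReal.ofReal_rpow_of_nonneg (norm_nonneg _) hp0.le]
end

section
/- Let n ≥ 2, let e₁ ∈ ℝⁿ be the first standard basis vector, let F = {0} ∪ {2^{−j} e₁ : j ∈ ℕ, j ≥ 2} ⊆ ℝⁿ, and let Ω₁ = B(0,2) \ F, where B(0,2) is the open ball of radius 2 centered at the origin. Then for every p with 1 < p < n, the domain Ω₁ admits a p-Hardy inequality: there exists C > 0 such that ∫_{Ω₁} |u(x)|^p d_{Ω₁}(x)^{−p} dx ≤ C ∫_{Ω₁} ‖∇u(x)‖^p dx for every Lipschitz function u : ℝⁿ → ℝ with compact support contained in Ω₁. -/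
open MeasureTheory Metric ENNReal

lemma hx_young (p A κ : ℝ) (hp : 1 < p) (hA : 0 < A) (hκ : 0 < κ) :
    ∃ C : ℝ, 0 < C ∧ ∀ a b : ℝ, 0 ≤ a → 0 ≤ b → A * a ^ (p-1) * b ≤ κ * a ^ p + C * b ^ p := by
  refine ⟨A * (A / κ) ^ (p-1), by positivity, fun a b ha hb => ?_⟩
  have e : ∀ t : ℝ, 0 ≤ t → t ^ p = t ^ (p-1) * t := fun t ht => by
    rw [← Real.rpow_add_one' ht (by linarith)]; congr 1; ring
  have h0 : 0 ≤ a ^ (p-1) := by positivity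
  have h1 : 0 ≤ κ * a ^ p := by positivity
  have h2 : 0 ≤ A * (A / κ) ^ (p-1) * b ^ p := by positivity
  by_cases h : A * b ≤ κ * a
  · have : A * a ^ (p-1) * b ≤ κ * a ^ p := by
      rw [e a ha]; nlinarith [mul_le_mul_of_nonneg_left h h0]
    linarith
  · have h3 : a ≤ A / κ * b := by
      rw [div_mul_eq_mul_div, le_div_iff₀ hκ]; linarith
    have h4 : a ^ (p-1) ≤ (A / κ) ^ (p-1) * b ^ (p-1) := by
      rw [← Real.mul_rpow (by positivity) hb]
      exact Real.rpow_le_rpow ha h3 (by linarith)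
    have : A * a ^ (p-1) * b ≤ A * (A / κ) ^ (p-1) * b ^ p := by
      rw [e b hb]
      have := mul_le_mul_of_nonneg_left h4 (mul_nonneg hA.le hb)
      nlinarith
    linarith

lemma hx_lip {E : Type*} [NormedAddCommGroup E] [ProperSpace E] (f : E → ℝ)
    (hf : LocallyLipschitz f) (hc : HasCompactSupport f) : ∃ L : NNReal, LipschitzWith L f := by
  obtain ⟨R, hR⟩ := hc.isCompact.isBounded.subset_closedBall (0 : E)
  obtain ⟨K, hK⟩ := (hf.locallyLipschitzOn (s := closedBall (0:E) (R+1))).exists_lipschitzOnWith_of_compact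
    (isCompact_closedBall _ _)
  obtain ⟨M, hM⟩ := hc.exists_bound_of_continuous hf.continuous
  have hM0 : 0 ≤ M := (norm_nonneg _).trans (hM 0)
  have hz : ∀ x, x ∉ closedBall (0:E) R → f x = 0 := fun x hx =>
    image_eq_zero_of_notMem_tsupport fun h => hx (hR h)
  have key : ∀ x y, x ∈ closedBall (0:E) R → dist (f x) (f y) ≤ (K + M) * dist x y := by
    intro x y hx
    by_cases hy : y ∈ closedBall (0:E) (R+1)
    · have := hK.dist_le_mul x (closedBall_subset_closedBall (by linarith) hx) y hy
      nlinarith [dist_nonneg (x := x) (y := y)]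
    · have hy' : y ∉ closedBall (0:E) R := fun h => hy (closedBall_subset_closedBall (by linarith) h)
      rw [hz y hy', dist_zero_right]
      have h1 : 1 ≤ dist x y := by
        simp only [mem_closedBall, dist_zero_right, not_le] at hx hy
        have := norm_sub_norm_le y x
        rw [dist_comm, dist_eq_norm]; linarith
      have := hM x
      nlinarith [K.2, dist_nonneg (x := x) (y := y), show (0:ℝ) ≤ K from K.2]
  refine ⟨K + ⟨M, hM0⟩, LipschitzWith.of_dist_le_mul fun x y => ?_⟩
  change dist (f x) (f y) ≤ (K + M) * dist x y
  by_cases hx : x ∈ closedBall (0:E) R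
  · exact key x y hx
  by_cases hy : y ∈ closedBall (0:E) R
  · rw [dist_comm, dist_comm x]; exact key y x hy
  · rw [hz x hx, hz y hy, dist_self]; positivity

lemma hx_integrable {E : Type*} [TopologicalSpace E] [T2Space E] [MeasurableSpace E] [BorelSpace E] (μ : Measure E)
    [IsFiniteMeasureOnCompacts μ] (g : E → ℝ) (hg : Measurable g) (K : Set E) (hK : IsCompact K)
    (M : ℝ) (hM : ∀ x ∈ K, ‖g x‖ ≤ M) (h0 : ∀ x, x ∉ K → g x = 0) : Integrable g μ := by
  rw [← integrableOn_iff_integrable_of_support_subset (s := K) (fun x hx => by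
    by_contra h; exact hx (h0 x h))]
  refine Measure.integrableOn_of_bounded (M := M) hK.measure_lt_top.ne hg.aestronglyMeasurable ?_
  exact (ae_restrict_iff' hK.measurableSet).2 (Filter.Eventually.of_forall hM)

lemma hx_fderiv_zero {E : Type*} [NormedAddCommGroup E] [NormedSpace ℝ E] (f : E → ℝ) (x : E)
    (hx : x ∉ tsupport f) : fderiv ℝ f x = 0 := by
  by_contra h
  exact hx (support_fderiv_subset ℝ h)

lemma hx_euler (n : ℕ) (f : EuclideanSpace ℝ (Fin n) → ℝ) (L : NNReal) (hL : LipschitzWith L f)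
    (hc : HasCompactSupport f) (c : EuclideanSpace ℝ (Fin n)) :
    Integrable (fun x => n * f x + fderiv ℝ f x (x - c)) ∧
    ∫ x, (n * f x + fderiv ℝ f x (x - c)) = 0 := by
  have hfi : Integrable f := hL.continuous.integrable_of_hasCompactSupport hc
  let e : Fin n → EuclideanSpace ℝ (Fin n) := fun i => EuclideanSpace.single i (1:ℝ)
  have hsum : ∀ x, fderiv ℝ f x (x - c) = ∑ i, fderiv ℝ f x (e i) * (x i - c i) := by
    intro x
    have : x - c = ∑ i, (x i - c i) • e i := by
      ext j
      simp [e, Finset.sum_apply, Pi.single_apply]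
    rw [this, map_sum]
    exact Finset.sum_congr rfl fun i _ => by rw [map_smul, smul_eq_mul, mul_comm]
  have hint : ∀ i, Integrable (fun x => fderiv ℝ f x (e i) * (x i - c i)) := by
    intro i
    have hcont : Continuous fun x : EuclideanSpace ℝ (Fin n) => x i - c i := by fun_prop
    obtain ⟨M, hM⟩ := hc.isCompact.exists_bound_of_continuousOn hcont.continuousOn
    refine hx_integrable _ _ ((measurable_fderiv_apply_const ℝ f (e i)).mul hcont.measurable)
      _ hc.isCompact (L * ‖e i‖ * M) ?_ ?_
    · intro x hx
      rw [norm_mul]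
      gcongr
      · exact (ContinuousLinearMap.le_opNorm _ _).trans (by
          gcongr; exact norm_fderiv_le_of_lipschitz ℝ hL)
      · exact hM x hx
    · intro x hx
      rw [hx_fderiv_zero f x hx]; simp
  have hval : ∀ i, ∫ x, fderiv ℝ f x (e i) * (x i - c i) = - ∫ x, f x := by
    intro i
    have hg : LipschitzWith 1 (fun x : EuclideanSpace ℝ (Fin n) => x i - c i) := by
      refine LipschitzWith.of_dist_le_mul fun x y => ?_
      rw [Real.dist_eq, dist_eq_norm, NNReal.coe_one, one_mul]
      have := PiLp.norm_apply_le (x - y) i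
      simpa using this
    have := LipschitzWith.integral_lineDeriv_mul_eq (μ := volume) hg hL hc (e i)
    have h1 : ∀ x : EuclideanSpace ℝ (Fin n),
        lineDeriv ℝ (fun x : EuclideanSpace ℝ (Fin n) => x i - c i) x (e i) = 1 := by
      intro x
      have h2 : HasFDerivAt (fun x : EuclideanSpace ℝ (Fin n) => x i - c i)
        (EuclideanSpace.proj i : EuclideanSpace ℝ (Fin n) →L[ℝ] ℝ) x :=
        (EuclideanSpace.proj (𝕜 := ℝ) i).hasFDerivAt.sub_const _
      rw [h2.differentiableAt.lineDeriv_eq_fderiv, h2.fderiv]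
      simp [e]
    simp only [h1, one_mul] at this
    rw [this, ← integral_neg]
    refine integral_congr_ae ?_
    filter_upwards [hL.ae_differentiableAt] with x hx
    rw [hx.lineDeriv_eq_fderiv, map_neg]; ring
  have hi2 : Integrable fun x => fderiv ℝ f x (x - c) := by
    simp only [hsum]
    exact integrable_finsetSum _ fun i _ => hint i
  refine ⟨(hfi.const_mul _).add hi2, ?_⟩
  rw [integral_add (hfi.const_mul _) hi2]
  simp only [hsum]
  rw [integral_finsetSum _ fun i _ => hint i]
  simp only [hval]
  rw [integral_const_mul]
  simp

lemma hx_locLip {E : Type*} [NormedAddCommGroup E] [NormedSpace ℝ E] (p : ℝ) (hp : 1 < p)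
    (U : Set E) (hU : IsOpen U) (ψ : E → ℝ) (hψ : ContDiffOn ℝ 1 ψ U) (u : E → ℝ) (L : NNReal)
    (hL : LipschitzWith L u) (hs : tsupport u ⊆ U) :
    LocallyLipschitz (fun x => ψ x * |u x| ^ p) := by
  intro x
  by_cases hx : x ∈ tsupport u
  · have h1 : ContDiffAt ℝ 1 (fun z : E × ℝ => ψ z.1 * |z.2| ^ p) (x, u x) := by
      have h2 : ContDiffAt ℝ 1 ψ x := hψ.contDiffAt (hU.mem_nhds (hs hx))
      have h3 : ContDiff ℝ 1 (fun t : ℝ => |t| ^ p) := by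
        simpa using contDiff_norm_rpow (E := ℝ) hp
      exact (ContDiffAt.comp (x, u x) (f := Prod.fst) (g := ψ) h2 contDiffAt_fst).mul
        (h3.comp contDiff_snd).contDiffAt
    obtain ⟨K, t, ht, hK⟩ := h1.exists_lipschitzOnWith
    have hg : LipschitzWith (max 1 L) (fun y => (y, u y)) := LipschitzWith.id.prodMk hL
    refine ⟨K * max 1 L, (fun y => (y, u y)) ⁻¹' t, hg.continuous.continuousAt.preimage_mem_nhds ht, ?_⟩
    exact hK.comp hg.lipschitzOnWith (Set.mapsTo_preimage _ _)
  · refine ⟨0, (tsupport u)ᶜ, (isClosed_tsupport u).isOpen_compl.mem_nhds hx, ?_⟩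
    intro y hy z hz
    simp [image_eq_zero_of_notMem_tsupport hy, image_eq_zero_of_notMem_tsupport hz,
      Real.zero_rpow (by linarith : p ≠ 0)]

lemma hx_abs (n : ℕ) (p κ A : ℝ) (hp : 1 < p) (hκ : 0 < κ) (hA : 0 < A) :
    ∃ C : ℝ, 0 < C ∧ ∀ (c : EuclideanSpace ℝ (Fin n)) (U : Set (EuclideanSpace ℝ (Fin n)))
      (ψ w : EuclideanSpace ℝ (Fin n) → ℝ), IsOpen U → ContDiffOn ℝ 1 ψ U →
      (∀ x ∈ U, 0 ≤ ψ x) → (∀ x ∈ U, 0 ≤ w x) →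
      (∀ x ∈ U, κ * w x ^ p ≤ n * ψ x + fderiv ℝ ψ x (x - c)) →
      (∀ x ∈ U, ψ x * ‖x - c‖ ≤ A * w x ^ (p - 1)) →
      ∀ (u : EuclideanSpace ℝ (Fin n) → ℝ) (L : NNReal), LipschitzWith L u → HasCompactSupport u →
      tsupport u ⊆ U →
      ∫⁻ x, ENNReal.ofReal (|u x| ^ p * w x ^ p) ≤
        ENNReal.ofReal C * ∫⁻ x, ENNReal.ofReal (‖fderiv ℝ u x‖ ^ p) := by
  obtain ⟨C, hC, hY⟩ := hx_young p (p * A) (κ / 2) hp (by positivity) (by positivity)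
  refine ⟨C / (κ / 2), by positivity, ?_⟩
  intro c U ψ w hU hψ hψ0 hw0 h1 h2 u L hL hc hs
  have hp0 : p ≠ 0 := by linarith
  set f : EuclideanSpace ℝ (Fin n) → ℝ := fun x => ψ x * |u x| ^ p with hf
  have hsf : tsupport f ⊆ tsupport u := by
    refine closure_mono fun x hx => ?_
    intro h0
    apply hx
    simp [hf, h0, Real.zero_rpow hp0]
  have hcf : HasCompactSupport f := hc.of_isClosed_subset (isClosed_tsupport f) hsf
  obtain ⟨Lf, hLf⟩ := hx_lip f (hx_locLip p hp U hU ψ hψ u L hL hs) hcf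
  obtain ⟨hHi, hH0⟩ := hx_euler n f Lf hLf hcf c
  set H := fun x => n * f x + fderiv ℝ f x (x - c) with hH
  set B := fun x => ‖fderiv ℝ u x‖ ^ p with hB
  have hBi : Integrable B := by
    refine hx_integrable _ _ ((measurable_fderiv ℝ u).norm.pow_const p)
      _ hc.isCompact ((L:ℝ) ^ p) ?_ ?_
    · intro x hx
      rw [Real.norm_of_nonneg (by positivity)]
      exact Real.rpow_le_rpow (norm_nonneg _) (norm_fderiv_le_of_lipschitz ℝ hL) (by linarith)
    · intro x hx
      simp [hB, hx_fderiv_zero u x hx, Real.zero_rpow hp0]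
  have hpt : ∀ᵐ x, 0 ≤ κ / 2 * (|u x| ^ p * w x ^ p) ∧
      κ / 2 * (|u x| ^ p * w x ^ p) ≤ C * B x + H x := by
    filter_upwards [hL.ae_differentiableAt] with x hx
    by_cases hxs : x ∈ tsupport u
    · have hxU := hs hxs
      have hw := hw0 x hxU
      refine ⟨by positivity, ?_⟩
      have hdψ : HasFDerivAt ψ (fderiv ℝ ψ x) x :=
        ((hψ.contDiffAt (hU.mem_nhds hxU)).differentiableAt one_ne_zero).hasFDerivAt
      have hdu := (hasDerivAt_abs_rpow (u x) hp).comp_hasFDerivAt x hx.hasFDerivAt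
      have hdf := (hdψ.mul hdu).fderiv
      have hHx : H x = |u x| ^ p * (n * ψ x + fderiv ℝ ψ x (x - c)) +
          ψ x * (p * |u x| ^ (p - 2) * u x * fderiv ℝ u x (x - c)) := by
        have : fderiv ℝ f x (x - c) = ψ x * (p * |u x| ^ (p - 2) * u x * fderiv ℝ u x (x - c))
            + |u x| ^ p * fderiv ℝ ψ x (x - c) := by
          have h5 : fderiv ℝ f x = _ := hdf
          rw [h5]; simp
        simp only [hH]; rw [this]; simp only [hf]; ring
      have h6 : |p * |u x| ^ (p - 2) * u x| = p * |u x| ^ (p-1) := by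
        rw [abs_mul, abs_mul, abs_of_pos (by linarith : 0 < p), abs_of_nonneg (by positivity : 0 ≤ |u x| ^ (p-2)),
          mul_assoc, ← Real.rpow_add_one' (abs_nonneg _) (by linarith)]
        congr 2; ring
      have h7 : |ψ x * (p * |u x| ^ (p - 2) * u x * fderiv ℝ u x (x - c))| ≤
          p * A * (|u x| * w x) ^ (p-1) * ‖fderiv ℝ u x‖ := by
        rw [abs_mul, abs_mul, h6, abs_of_nonneg (hψ0 x hxU), Real.mul_rpow (abs_nonneg _) hw]
        have h8 : |fderiv ℝ u x (x - c)| ≤ ‖fderiv ℝ u x‖ * ‖x - c‖ :=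
          (fderiv ℝ u x).le_opNorm _
        have hψx := hψ0 x hxU
        calc ψ x * (p * |u x| ^ (p-1) * |fderiv ℝ u x (x - c)|) 
            ≤ ψ x * (p * |u x| ^ (p-1) * (‖fderiv ℝ u x‖ * ‖x - c‖)) := by gcongr
          _ = (p * |u x| ^ (p-1) * ‖fderiv ℝ u x‖) * (ψ x * ‖x - c‖) := by ring
          _ ≤ (p * |u x| ^ (p-1) * ‖fderiv ℝ u x‖) * (A * w x ^ (p-1)) := by
            exact mul_le_mul_of_nonneg_left (h2 x hxU) (by positivity)
          _ = _ := by ring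
      have h9 := hY (|u x| * w x) ‖fderiv ℝ u x‖ (by positivity) (by positivity)
      have h10 := mul_le_mul_of_nonneg_left (h1 x hxU) (by positivity : 0 ≤ |u x| ^ p)
      rw [Real.mul_rpow (abs_nonneg _) hw, Real.mul_rpow (abs_nonneg _) hw] at h9
      rw [hHx]
      have := neg_abs_le (ψ x * (p * |u x| ^ (p - 2) * u x * fderiv ℝ u x (x - c)))
      simp only [hB]
      rw [Real.mul_rpow (abs_nonneg _) hw] at h7
      nlinarith
    · have hu0 := image_eq_zero_of_notMem_tsupport hxs
      have : H x = 0 := by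
        simp only [hH]
        rw [hx_fderiv_zero f x (fun h => hxs (hsf h))]
        simp [hf, hu0, Real.zero_rpow hp0]
      rw [this, hu0]
      simp only [abs_zero, Real.zero_rpow hp0, zero_mul, mul_zero, le_refl, true_and, add_zero]
      positivity
  have hCB : Integrable fun x => C * B x := hBi.const_mul C
  have hfin : ENNReal.ofReal (κ / 2) * ∫⁻ x, ENNReal.ofReal (|u x| ^ p * w x ^ p) ≤
      ENNReal.ofReal C * ∫⁻ x, ENNReal.ofReal (B x) := by
    rw [← lintegral_const_mul' _ _ ENNReal.ofReal_ne_top, ← lintegral_const_mul' _ _ ENNReal.ofReal_ne_top]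
    calc ∫⁻ x, ENNReal.ofReal (κ / 2) * ENNReal.ofReal (|u x| ^ p * w x ^ p)
        ≤ ∫⁻ x, ENNReal.ofReal (C * B x + H x) := by
          refine lintegral_mono_ae ?_
          filter_upwards [hpt] with x hx
          rw [← ENNReal.ofReal_mul (by positivity)]
          exact ENNReal.ofReal_le_ofReal hx.2
      _ = ENNReal.ofReal (∫ x, (C * B x + H x)) := by
          refine (ofReal_integral_eq_lintegral_ofReal (hCB.add hHi) ?_).symm
          filter_upwards [hpt] with x hx
          exact hx.1.trans hx.2
      _ = ENNReal.ofReal (∫ x, C * B x) := by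
          rw [integral_add hCB hHi, hH0, add_zero]
      _ = ∫⁻ x, ENNReal.ofReal (C * B x) := by
          rw [ofReal_integral_eq_lintegral_ofReal hCB]
          exact Filter.Eventually.of_forall fun x => by
            simp only [hB, Pi.zero_apply]; positivity
      _ = _ := by
          refine lintegral_congr fun x => ?_
          rw [ENNReal.ofReal_mul hC.le]
  have hk0 : ENNReal.ofReal (κ / 2) ≠ 0 := by simpa using hκ
  rw [ENNReal.ofReal_div_of_pos (by positivity)]
  have hrw : ∀ a b c : ENNReal, a / b * c = a * c / b := fun a b c => by
    rw [div_eq_mul_inv, div_eq_mul_inv, mul_right_comm]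
  rw [hrw, ENNReal.le_div_iff_mul_le (Or.inl hk0) (Or.inl ENNReal.ofReal_ne_top), mul_comm]
  exact hfin

lemma hx_point (n : ℕ) (p : ℝ) (hp : 1 < p) (hpn : p < n) :
    ∃ C : ℝ, 0 < C ∧ ∀ (c : EuclideanSpace ℝ (Fin n)) (u : EuclideanSpace ℝ (Fin n) → ℝ)
      (L : NNReal), LipschitzWith L u → HasCompactSupport u →
      ∫⁻ x, ENNReal.ofReal (|u x| ^ p * ‖x - c‖ ^ (-p)) ≤
        ENNReal.ofReal C * ∫⁻ x, ENNReal.ofReal (‖fderiv ℝ u x‖ ^ p) := by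
  obtain ⟨C, hC, h⟩ := hx_abs n p (n - p) 1 hp (by linarith) one_pos
  refine ⟨C, hC, fun c u L hL hc => ?_⟩
  have step : ∀ ε : ℝ, 0 < ε →
      ∫⁻ x, ENNReal.ofReal (|u x| ^ p * ((‖x - c‖ ^ 2 + ε) ^ (-(1/2) : ℝ)) ^ p) ≤
        ENNReal.ofReal C * ∫⁻ x, ENNReal.ofReal (‖fderiv ℝ u x‖ ^ p) := by
    intro ε hε
    have hpos : ∀ x : EuclideanSpace ℝ (Fin n), 0 < ‖x - c‖ ^ 2 + ε := fun x => by positivity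
    refine h c Set.univ (fun x => (‖x - c‖ ^ 2 + ε) ^ (-(p/2))) _ isOpen_univ ?_
      (fun x _ => Real.rpow_nonneg (hpos x).le _) (fun x _ => Real.rpow_nonneg (hpos x).le _)
      ?_ ?_ u L hL hc (Set.subset_univ _)
    · refine ContDiff.contDiffOn ?_
      refine ContDiff.rpow_const_of_ne ?_ (fun x => (hpos x).ne')
      exact ((contDiff_id.sub contDiff_const).norm_sq ℝ).add contDiff_const
    · intro x _
      have hs := hpos x
      have hd : HasFDerivAt (fun x => (‖x - c‖ ^ 2 + ε) ^ (-(p/2)))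
          ((-(p/2) * (‖x - c‖ ^ 2 + ε) ^ (-(p/2) - 1)) • (2 • (innerSL ℝ (x - c)).comp
            (ContinuousLinearMap.id ℝ (EuclideanSpace ℝ (Fin n))))) x := by
        have h0 : HasFDerivAt (fun y : EuclideanSpace ℝ (Fin n) => ‖y - c‖ ^ 2 + ε)
          (2 • (innerSL ℝ (x - c)).comp (ContinuousLinearMap.id ℝ (EuclideanSpace ℝ (Fin n)))) x :=
          ((hasFDerivAt_id x).sub_const c).norm_sq.add_const ε
        exact HasDerivAt.comp_hasFDerivAt (h₂ := fun t : ℝ => t ^ (-(p/2))) x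
          (Real.hasDerivAt_rpow_const (p := -(p/2)) (Or.inl hs.ne')) h0
      rw [hd.fderiv, ← Real.rpow_mul hs.le]
      have e1 : -(1/2) * p = -(p/2) := by ring
      have e2 : (‖x - c‖ ^ 2 + ε) ^ (-(p/2)) = (‖x - c‖ ^ 2 + ε) ^ (-(p/2) - 1) * (‖x - c‖ ^ 2 + ε) := by
        rw [← Real.rpow_add_one hs.ne']; congr 1; ring
      have e3 : 0 < (‖x - c‖ ^ 2 + ε) ^ (-(p/2) - 1) := Real.rpow_pos_of_pos hs _
      simp only [smul_apply, ContinuousLinearMap.comp_apply,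
        ContinuousLinearMap.id_apply, innerSL_apply_apply, real_inner_self_eq_norm_sq, smul_eq_mul, nsmul_eq_mul]
      rw [e1, e2]
      push_cast
      nlinarith [mul_pos e3 hε, mul_pos (mul_pos e3 hε) (by linarith : 0 < p)]
    · intro x _
      have hs := hpos x
      rw [← Real.rpow_mul hs.le, one_mul]
      have e1 : -(1/2) * (p-1) = -(p/2) + 1/2 := by ring
      rw [e1, Real.rpow_add hs, ← Real.sqrt_eq_rpow]
      gcongr
      exact Real.le_sqrt_of_sq_le (by linarith)
  have hp0 : -p ≠ 0 := by linarith
  have hcu := hL.continuous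
  calc ∫⁻ x, ENNReal.ofReal (|u x| ^ p * ‖x - c‖ ^ (-p))
      ≤ ∫⁻ x, Filter.liminf (fun k : ℕ => ENNReal.ofReal (|u x| ^ p *
          ((‖x - c‖ ^ 2 + 1 / ((k:ℝ) + 1)) ^ (-(1/2) : ℝ)) ^ p)) Filter.atTop := by
        refine lintegral_mono fun x => ?_
        by_cases hx : x - c = 0
        · simp [hx, Real.zero_rpow hp0]
        · have hn : 0 < ‖x - c‖ := norm_pos_iff.2 hx
          have e1 : ‖x - c‖ ^ (-p) = ((‖x - c‖ ^ 2 + 0) ^ (-(1/2) : ℝ)) ^ p := by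
            rw [add_zero, ← Real.rpow_natCast, ← Real.rpow_mul hn.le, ← Real.rpow_mul hn.le]
            congr 1; push_cast; ring
          rw [e1]
          refine ge_of_eq (Filter.Tendsto.liminf_eq ?_)
          refine (ENNReal.continuous_ofReal.tendsto _).comp ?_
          refine Filter.Tendsto.const_mul _ ?_
          refine Filter.Tendsto.rpow_const ?_ (Or.inr (by linarith))
          refine Filter.Tendsto.rpow_const ?_ (Or.inl (by positivity))
          exact tendsto_const_nhds.add tendsto_one_div_add_atTop_nhds_zero_nat
    _ ≤ Filter.liminf (fun k : ℕ => ∫⁻ x, ENNReal.ofReal (|u x| ^ p *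
          ((‖x - c‖ ^ 2 + 1 / ((k:ℝ) + 1)) ^ (-(1/2) : ℝ)) ^ p)) Filter.atTop := by
        refine lintegral_liminf_le fun k => ?_
        have := hcu.measurable
        fun_prop
    _ ≤ _ := by
        refine Filter.liminf_le_of_le (by isBoundedDefault) fun b hb => ?_
        obtain ⟨k, hk⟩ := hb.exists
        exact hk.trans (step _ (by positivity))

lemma hx_sphere (n : ℕ) (hn : 2 ≤ n) (p : ℝ) (hp : 1 < p) :
    ∃ C : ℝ, 0 < C ∧ ∀ (u : EuclideanSpace ℝ (Fin n) → ℝ)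
      (L : NNReal), LipschitzWith L u → HasCompactSupport u → tsupport u ⊆ ball 0 2 →
      ∫⁻ x, ENNReal.ofReal (|u x| ^ p * (4 - ‖x‖ ^ 2)⁻¹ ^ p) ≤
        ENNReal.ofReal C * ∫⁻ x, ENNReal.ofReal (‖fderiv ℝ u x‖ ^ p) := by
  have hn0 : (0:ℝ) < n := by exact_mod_cast (by omega : 0 < n)
  have hmin : 0 < 4 * min (n:ℝ) (2 * (p - 1)) :=
    mul_pos (by norm_num) (lt_min hn0 (by linarith))
  obtain ⟨C, hC, h⟩ := hx_abs n p (4 * min (n:ℝ) (2 * (p-1))) 2 hp hmin two_pos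
  refine ⟨C, hC, fun u L hL hc hs => ?_⟩
  have hpos : ∀ x ∈ ball (0 : EuclideanSpace ℝ (Fin n)) 2, 0 < 4 - ‖x‖ ^ 2 := fun x hx => by
    rw [mem_ball_zero_iff] at hx
    nlinarith [norm_nonneg x]
  refine h 0 (ball 0 2) (fun x => (4 - ‖x‖ ^ 2) ^ (1 - p)) (fun x => (4 - ‖x‖ ^ 2)⁻¹) isOpen_ball ?_
      (fun x hx => Real.rpow_nonneg (hpos x hx).le _) (fun x hx => (inv_pos.2 (hpos x hx)).le)
      ?_ ?_ u L hL hc hs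
  · refine ContDiffOn.rpow_const_of_ne ?_ (fun x hx => (hpos x hx).ne')
    exact (contDiff_const.sub (contDiff_id.norm_sq ℝ)).contDiffOn
  · intro x hx
    have hs := hpos x hx
    have hd : HasFDerivAt (fun x => (4 - ‖x‖ ^ 2) ^ (1 - p))
        (((1 - p) * (4 - ‖x‖ ^ 2) ^ (1 - p - 1)) • (-(2 • (innerSL ℝ x).comp
          (ContinuousLinearMap.id ℝ (EuclideanSpace ℝ (Fin n))) : EuclideanSpace ℝ (Fin n) →L[ℝ] ℝ))) x := by
      have h0 : HasFDerivAt (fun y : EuclideanSpace ℝ (Fin n) => 4 - ‖y‖ ^ 2)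
          (-(2 • (innerSL ℝ x).comp (ContinuousLinearMap.id ℝ (EuclideanSpace ℝ (Fin n))) :
            EuclideanSpace ℝ (Fin n) →L[ℝ] ℝ)) x :=
        (hasFDerivAt_id x).norm_sq.const_sub 4
      exact HasDerivAt.comp_hasFDerivAt (h₂ := fun t : ℝ => t ^ (1 - p)) x
        (Real.hasDerivAt_rpow_const (p := 1 - p) (Or.inl hs.ne')) h0
    rw [hd.fderiv]
    have e0 : 1 - p - 1 = -p := by ring
    have e1 : (4 - ‖x‖ ^ 2)⁻¹ ^ p = (4 - ‖x‖ ^ 2) ^ (-p) := by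
      rw [Real.inv_rpow hs.le, Real.rpow_neg hs.le]
    have e2 : (4 - ‖x‖ ^ 2) ^ (1 - p) = (4 - ‖x‖ ^ 2) ^ (-p) * (4 - ‖x‖ ^ 2) := by
      rw [← Real.rpow_add_one hs.ne']; congr 1; ring
    have e3 : 0 < (4 - ‖x‖ ^ 2) ^ (-p) := Real.rpow_pos_of_pos hs _
    simp only [sub_zero, smul_apply, ContinuousLinearMap.comp_apply, neg_apply,
      ContinuousLinearMap.id_apply, innerSL_apply_apply, real_inner_self_eq_norm_sq, smul_eq_mul, nsmul_eq_mul]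
    rw [e0, e1, e2]
    push_cast
    have m1 := min_le_left (n:ℝ) (2 * (p - 1))
    have m2 := min_le_right (n:ℝ) (2 * (p - 1))
    set m := min (n:ℝ) (2 * (p - 1))
    have k1 := mul_le_mul_of_nonneg_right m1 hs.le
    have k2 := mul_le_mul_of_nonneg_right m2 (sq_nonneg ‖x‖)
    have k3 : 4 * m ≤ n * (4 - ‖x‖ ^ 2) + 2 * (p-1) * ‖x‖ ^ 2 := by nlinarith
    nlinarith [mul_le_mul_of_nonneg_right k3 e3.le]
  · intro x hx
    have hs := hpos x hx
    rw [Real.inv_rpow hs.le, ← Real.rpow_neg hs.le, neg_sub, sub_zero, mul_comm]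
    rw [mem_ball_zero_iff] at hx
    gcongr

lemma hx_inv (p m d : ℝ) (hp : 0 < p) (hm : 0 < m) (h : m ≤ 18 * d) :
    d ^ (-p) ≤ 18 ^ p * m ^ (-p) := by
  have h1 : m / 18 ≤ d := by linarith
  have h2 : 0 < m / 18 := by positivity
  calc d ^ (-p) ≤ (m / 18) ^ (-p) := Real.rpow_le_rpow_of_nonpos h2 h1 (by linarith)
    _ = 18 ^ p * m ^ (-p) := by
      rw [Real.div_rpow hm.le (by norm_num), Real.rpow_neg (by norm_num : (0:ℝ) ≤ 18), div_inv_eq_mul, mul_comm]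

/-- Lipschitz cutoff around `c` at scale `r`. -/
noncomputable def hxCut {E : Type*} [NormedAddCommGroup E] (c : E) (r : ℝ) (x : E) : ℝ :=
  max 0 (min 1 (2 - r⁻¹ * ‖x - c‖))

lemma hxCut_lip {E : Type*} [NormedAddCommGroup E] (c : E) (r : ℝ) (hr : 0 < r) :
    LipschitzWith ⟨r⁻¹, (inv_pos.2 hr).le⟩ (hxCut c r) := by
  have : LipschitzWith ⟨r⁻¹, (inv_pos.2 hr).le⟩ (fun x : E => 2 - r⁻¹ * ‖x - c‖) := by
    refine LipschitzWith.of_dist_le_mul fun x y => ?_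
    change _ ≤ r⁻¹ * _
    rw [Real.dist_eq, dist_eq_norm]
    have h1 : |‖y - c‖ - ‖x - c‖| ≤ ‖x - y‖ := by
      have := abs_norm_sub_norm_le (y - c) (x - c)
      rwa [sub_sub_sub_cancel_right, norm_sub_rev y x] at this
    have h2 : 2 - r⁻¹ * ‖x - c‖ - (2 - r⁻¹ * ‖y - c‖) = r⁻¹ * (‖y - c‖ - ‖x - c‖) := by ring
    rw [h2, abs_mul, abs_of_pos (inv_pos.2 hr)]
    gcongr
  exact (this.const_min 1).const_max 0

lemma hx_local (n : ℕ) (p C : ℝ) (hp : 1 < p)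
    (hC : ∀ (c : EuclideanSpace ℝ (Fin n)) (u : EuclideanSpace ℝ (Fin n) → ℝ)
      (L : NNReal), LipschitzWith L u → HasCompactSupport u →
      ∫⁻ x, ENNReal.ofReal (|u x| ^ p * ‖x - c‖ ^ (-p)) ≤
        ENNReal.ofReal C * ∫⁻ x, ENNReal.ofReal (‖fderiv ℝ u x‖ ^ p))
    (c : EuclideanSpace ℝ (Fin n)) (r : ℝ) (hr : 0 < r)
    (u : EuclideanSpace ℝ (Fin n) → ℝ) (L : NNReal) (hL : LipschitzWith L u)
    (hc : HasCompactSupport u) :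
    ∫⁻ x, ENNReal.ofReal (|u x * hxCut c r x| ^ p * ‖x - c‖ ^ (-p)) ≤
      ENNReal.ofReal C * ∫⁻ x in closedBall c (2 * r),
        ENNReal.ofReal ((‖fderiv ℝ u x‖ + r⁻¹ * |u x|) ^ p) := by
  have hφ := hxCut_lip c r hr
  have hcs : HasCompactSupport (fun x => u x * hxCut c r x) := hc.mul_right
  have hll : LocallyLipschitz (fun x => u x * hxCut c r x) := by
    have h1 : ContDiff ℝ 1 (fun z : ℝ × ℝ => z.1 * z.2) := contDiff_fst.mul contDiff_snd
    exact h1.locallyLipschitz.comp (hL.locallyLipschitz.prodMk hφ.locallyLipschitz)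
  obtain ⟨L', hL'⟩ := hx_lip _ hll hcs
  refine (hC c _ L' hL' hcs).trans ?_
  refine mul_le_mul_right ?_ _
  rw [← lintegral_indicator isClosed_closedBall.measurableSet]
  refine lintegral_mono_ae ?_
  filter_upwards [hL.ae_differentiableAt, hφ.ae_differentiableAt] with x hx1 hx2
  by_cases hx : x ∈ closedBall c (2 * r)
  · rw [Set.indicator_of_mem hx]
    refine ENNReal.ofReal_le_ofReal ?_
    refine Real.rpow_le_rpow (norm_nonneg _) ?_ (by linarith)
    have h3 : fderiv ℝ (fun x => u x * hxCut c r x) x =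
      u x • fderiv ℝ (hxCut c r) x + hxCut c r x • fderiv ℝ u x := fderiv_fun_mul hx1 hx2
    rw [h3]
    refine (norm_add_le _ _).trans ?_
    rw [norm_smul, norm_smul, add_comm]
    have h4 : ‖fderiv ℝ (hxCut c r) x‖ ≤ r⁻¹ := norm_fderiv_le_of_lipschitz ℝ hφ
    have h5 : ‖hxCut c r x‖ ≤ 1 := by
      unfold hxCut
      rw [Real.norm_of_nonneg (le_max_left _ _)]
      exact max_le zero_le_one (min_le_left _ _)
    have h6 : ‖u x‖ = |u x| := rfl
    rw [h6, mul_comm |u x|]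
    gcongr
    exact mul_le_of_le_one_left (norm_nonneg _) h5
  · rw [Set.indicator_of_notMem hx]
    have h3 : fderiv ℝ (fun x => u x * hxCut c r x) x = 0 := by
      have : (fun x => u x * hxCut c r x) =ᶠ[nhds x] fun _ => 0 := by
        filter_upwards [isClosed_closedBall.isOpen_compl.mem_nhds hx] with y hy
        have hy : 2 * r < ‖y - c‖ := by simpa [dist_eq_norm] using hy
        have : 2 - r⁻¹ * ‖y - c‖ ≤ 0 := by
          rw [sub_nonpos, inv_mul_eq_div, le_div_iff₀ hr]; exact hy.le
        have : hxCut c r y = 0 := max_eq_left ((min_le_right _ _).trans this)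
        rw [this, mul_zero]
      rw [this.fderiv_eq]; simp
    rw [h3]
    simp [Real.zero_rpow (by linarith : p ≠ 0)]

theorem hardy_punctured_sequence_example
    (n : ℕ) (hn : 2 ≤ n)
    (e₁ : EuclideanSpace ℝ (Fin n))
    (he₁ : e₁ = EuclideanSpace.single (⟨0, by omega⟩ : Fin n) (1 : ℝ))
    (F : Set (EuclideanSpace ℝ (Fin n)))
    (hF : F = insert 0 {x | ∃ j : ℕ, 2 ≤ j ∧ x = ((2 : ℝ) ^ j)⁻¹ • e₁})
    (Ω₁ : Set (EuclideanSpace ℝ (Fin n)))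
    (hΩ₁ : Ω₁ = Metric.ball 0 2 \ F)
    (p : ℝ) (hp1 : 1 < p) (hpn : p < n) :
    ∃ C : ℝ, 0 < C ∧ ∀ u : EuclideanSpace ℝ (Fin n) → ℝ,
      (∃ L : NNReal, LipschitzWith L u) → HasCompactSupport u → tsupport u ⊆ Ω₁ →
      ∫⁻ x in Ω₁, ENNReal.ofReal (|u x| ^ p * Metric.infDist x Ω₁ᶜ ^ (-p)) ≤
        ENNReal.ofReal C * ∫⁻ x in Ω₁, ENNReal.ofReal (‖fderiv ℝ u x‖ ^ p) := by
  obtain ⟨C1, hC1, hP⟩ := hx_point n p hp1 hpn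
  obtain ⟨C2, hC2, hS⟩ := hx_sphere n hn p hp1
  have hp0 : 0 < p := by linarith
  set T : ENNReal := ENNReal.ofReal (18 ^ p) * (ENNReal.ofReal C1 + ENNReal.ofReal C2 +
    ENNReal.ofReal C1 * (ENNReal.ofReal (2 ^ (p-1)) *
      (1 + ENNReal.ofReal (10 ^ p) * ENNReal.ofReal C1))) with hT
  have hTtop : T ≠ ⊤ := by
    rw [hT]; finiteness
  refine ⟨T.toReal + 1, by positivity, ?_⟩
  rintro u ⟨L, hL⟩ hc hs
  have hen : ‖e₁‖ = 1 := by rw [he₁]; simp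
  set D := ∫⁻ x, ENNReal.ofReal (‖fderiv ℝ u x‖ ^ p) with hD
  have hDΩ : D ≤ ∫⁻ x in Ω₁, ENNReal.ofReal (‖fderiv ℝ u x‖ ^ p) := by
    refine le_trans ?_ (lintegral_mono_set hs)
    rw [hD, ← lintegral_indicator (isClosed_tsupport u).measurableSet]
    refine lintegral_mono fun x => ?_
    by_cases hx : x ∈ tsupport u
    · rw [Set.indicator_of_mem hx]
    · rw [Set.indicator_of_notMem hx, hx_fderiv_zero u x hx]
      simp [Real.zero_rpow hp0.ne']
  suffices hmain : ∫⁻ x in Ω₁, ENNReal.ofReal (|u x| ^ p * Metric.infDist x Ω₁ᶜ ^ (-p)) ≤ T * D by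
    refine hmain.trans (mul_le_mul' ?_ hDΩ)
    conv_lhs => rw [← ENNReal.ofReal_toReal hTtop]
    exact ENNReal.ofReal_le_ofReal (by linarith)
  let c : ℕ → EuclideanSpace ℝ (Fin n) := fun j => ((2 : ℝ) ^ j)⁻¹ • e₁
  let r : ℕ → ℝ := fun j => ((2 : ℝ) ^ j)⁻¹ / 8
  have hr : ∀ j, 0 < r j := fun j => by positivity
  have hcn : ∀ j, ‖c j‖ = 8 * r j := fun j => by
    simp only [c, r, norm_smul, hen, mul_one]
    rw [Real.norm_of_nonneg (by positivity)]; ring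
  let g0 : EuclideanSpace ℝ (Fin n) → ENNReal := fun x => ENNReal.ofReal (|u x| ^ p * ‖x‖ ^ (-p))
  let g1 : EuclideanSpace ℝ (Fin n) → ENNReal := fun x => ENNReal.ofReal (|u x| ^ p * (4 - ‖x‖ ^ 2)⁻¹ ^ p)
  let g2 : ℕ → EuclideanSpace ℝ (Fin n) → ENNReal := fun j x =>
    ENNReal.ofReal (|u x * hxCut (c j) (r j) x| ^ p * ‖x - c j‖ ^ (-p))
  have hum := hL.continuous.measurable
  have hg0 : Measurable g0 := by fun_prop
  have hg1 : Measurable g1 := by fun_prop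
  have hg2 : ∀ j, Measurable (g2 j) := fun j => by
    have := (hxCut_lip (c j) (r j) (hr j)).continuous.measurable
    fun_prop
  have hI0 : ∫⁻ x, g0 x ≤ ENNReal.ofReal C1 * D := by
    simpa using hP 0 u L hL hc
  have hI1 : ∫⁻ x, g1 x ≤ ENNReal.ofReal C2 * D :=
    hS u L hL hc (hs.trans (by rw [hΩ₁]; exact Set.sdiff_subset))
  let G : EuclideanSpace ℝ (Fin n) → ENNReal := fun x =>
    ENNReal.ofReal (‖fderiv ℝ u x‖ ^ p) + ENNReal.ofReal (10 ^ p) * g0 x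
  have hI2 : ∀ j, ∫⁻ x, g2 j x ≤ ENNReal.ofReal C1 * (ENNReal.ofReal (2 ^ (p-1)) *
      ∫⁻ x in closedBall (c j) (2 * r j), G x) := by
    intro j
    refine (hx_local n p C1 hp1 hP (c j) (r j) (hr j) u L hL hc).trans ?_
    gcongr
    rw [← lintegral_const_mul' _ _ ENNReal.ofReal_ne_top]
    refine setLIntegral_mono' isClosed_closedBall.measurableSet fun x hx => ?_
    rw [mem_closedBall, dist_eq_norm] at hx
    have hrj := hr j
    have h1 : ‖x‖ ≤ 10 * r j := by
      have := norm_le_norm_add_norm_sub (c j) x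
      rw [norm_sub_rev] at this
      linarith [hcn j]
    have h2 : 0 < ‖x‖ := by
      have := norm_le_norm_add_norm_sub x (c j)
      linarith [hcn j]
    have h3 : (r j)⁻¹ ≤ 10 * ‖x‖⁻¹ := by
      rw [← div_eq_mul_inv, le_div_iff₀ h2, inv_mul_le_iff₀ hrj]; linarith
    simp only [G, g0]
    rw [← ENNReal.ofReal_mul (by positivity), ← ENNReal.ofReal_add (by positivity) (by positivity),
      ← ENNReal.ofReal_mul (by positivity)]
    refine ENNReal.ofReal_le_ofReal ?_
    have h4 : ((r j)⁻¹ * |u x|) ^ p ≤ 10 ^ p * (|u x| ^ p * ‖x‖ ^ (-p)) := by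
      calc ((r j)⁻¹ * |u x|) ^ p ≤ (10 * ‖x‖⁻¹ * |u x|) ^ p := by gcongr
        _ = _ := by
          rw [Real.mul_rpow (by positivity) (by positivity), Real.mul_rpow (by positivity) (by positivity),
            Real.inv_rpow h2.le, Real.rpow_neg h2.le]; ring
    have h5 : (‖fderiv ℝ u x‖ + (r j)⁻¹ * |u x|) ^ p ≤
        2 ^ (p-1) * (‖fderiv ℝ u x‖ ^ p + ((r j)⁻¹ * |u x|) ^ p) := by
      have := NNReal.rpow_add_le_mul_rpow_add_rpow ⟨‖fderiv ℝ u x‖, norm_nonneg _⟩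
        ⟨(r j)⁻¹ * |u x|, by positivity⟩ hp1.le
      exact_mod_cast this
    refine h5.trans ?_
    gcongr
  have hdisj : Pairwise (Function.onFun Disjoint fun j => closedBall (c j) (2 * r j)) := by
    have key : ∀ j k, j < k → Disjoint (closedBall (c j) (2 * r j)) (closedBall (c k) (2 * r k)) := by
      intro j k hjk
      rw [Set.disjoint_left]
      intro x hx hy
      rw [mem_closedBall, dist_eq_norm] at hx hy
      have h1 : r k ≤ r j / 2 := by
        have : (2:ℝ) ^ (j+1) ≤ 2 ^ k := pow_le_pow_right₀ (by norm_num) hjk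
        have h2 : ((2:ℝ) ^ k)⁻¹ ≤ ((2:ℝ) ^ (j+1))⁻¹ := inv_anti₀ (by positivity) this
        simp only [r]
        rw [pow_succ, mul_inv] at h2
        linarith
      have h2 : ‖c j‖ ≤ ‖c k‖ + ‖x - c j‖ + ‖x - c k‖ := by
        have h3 : c j = c k + (x - c k) - (x - c j) := by abel
        have h4 := norm_sub_le (c k + (x - c k)) (x - c j)
        have h5 := norm_add_le (c k) (x - c k)
        rw [← h3] at h4
        linarith
      rw [hcn, hcn] at h2
      have := hr j
      linarith
    intro j k hjk
    rcases lt_or_gt_of_ne hjk with h | h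
    · exact key j k h
    · exact (key k j h).symm
  have hI2s : ∑' j, ∫⁻ x, g2 j x ≤ ENNReal.ofReal C1 * (ENNReal.ofReal (2 ^ (p-1)) *
      ((1 + ENNReal.ofReal (10 ^ p) * ENNReal.ofReal C1) * D)) := by
    refine (ENNReal.tsum_le_tsum hI2).trans ?_
    rw [ENNReal.tsum_mul_left, ENNReal.tsum_mul_left]
    gcongr
    rw [← lintegral_iUnion (fun j => isClosed_closedBall.measurableSet) hdisj]
    refine (setLIntegral_le_lintegral _ _).trans ?_
    simp only [G]
    rw [lintegral_add_right _ (hg0.const_mul _), lintegral_const_mul _ hg0, add_mul, one_mul, mul_assoc]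
    gcongr
  have hpt : ∀ x ∈ Ω₁, ENNReal.ofReal (|u x| ^ p * Metric.infDist x Ω₁ᶜ ^ (-p)) ≤
      ENNReal.ofReal (18 ^ p) * (g0 x + g1 x + ∑' j, g2 j x) := by
    intro x hx
    set d := Metric.infDist x Ω₁ᶜ with hd
    have hd0 : 0 ≤ d := infDist_nonneg
    rcases hd0.eq_or_lt with hd1 | hd1
    · rw [← hd1, Real.zero_rpow (by linarith)]; simp
    have hne : (Ω₁ᶜ).Nonempty := ⟨0, by rw [hΩ₁, hF]; simp⟩
    obtain ⟨y, hy, hxy⟩ := (infDist_lt_iff hne).1 (show infDist x Ω₁ᶜ < 2 * d by rw [← hd]; linarith)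
    have hxy0 : 0 < dist x y := dist_pos.2 fun h => hy (h ▸ hx)
    have hxy' := hxy
    have hxb : ‖x‖ < 2 := by
      rw [hΩ₁] at hx; simpa using hx.1
    have gen : ∀ m : ℝ, 0 < m → m ≤ 18 * d → ENNReal.ofReal (|u x| ^ p * d ^ (-p)) ≤
        ENNReal.ofReal (18 ^ p) * ENNReal.ofReal (|u x| ^ p * m ^ (-p)) := by
      intro m hm hmd
      rw [← ENNReal.ofReal_mul (by positivity)]
      refine ENNReal.ofReal_le_ofReal ?_
      have := mul_le_mul_of_nonneg_left (hx_inv p m d hp0 hm hmd) (by positivity : 0 ≤ |u x| ^ p)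
      linarith
    have case0 : 0 < ‖x‖ → ‖x‖ ≤ 18 * d → ENNReal.ofReal (|u x| ^ p * d ^ (-p)) ≤
      ENNReal.ofReal (18 ^ p) * (g0 x + g1 x + ∑' j, g2 j x) := by
      intro h1 h2
      refine (gen _ h1 h2).trans ?_
      gcongr
      exact le_trans le_self_add le_self_add
    have hx0 : 0 < ‖x‖ := by
      rw [norm_pos_iff]
      rintro rfl
      rw [hΩ₁, hF] at hx
      exact hx.2 (Set.mem_insert _ _)
    have hy' : 2 ≤ ‖y‖ ∨ y = 0 ∨ ∃ j, y = c j := by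
      by_contra! hcon
      apply hy
      rw [hΩ₁, hF]
      refine ⟨by simpa using hcon.1, ?_⟩
      rintro (h | ⟨j, -, h⟩)
      · exact hcon.2.1 h
      · exact hcon.2.2 j h
    rcases hy' with h | h | ⟨j, h⟩
    · have h1 : 2 - ‖x‖ ≤ dist x y := by
        have := norm_sub_norm_le y x
        rw [dist_comm, dist_eq_norm]; linarith
      have h2 : 0 < 4 - ‖x‖ ^ 2 := by nlinarith
      refine (gen (4 - ‖x‖ ^ 2) h2 (by nlinarith)).trans ?_
      gcongr
      rw [Real.rpow_neg h2.le, ← Real.inv_rpow h2.le]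
      exact le_trans le_add_self le_self_add
    · rw [h, dist_zero_right] at hxy
      exact case0 hx0 (by linarith)
    · rw [h, dist_eq_norm] at hxy hxy0
      by_cases hj : ‖x - c j‖ ≤ r j
      · refine (gen _ hxy0 (by linarith)).trans ?_
        gcongr
        refine le_trans ?_ (le_trans (ENNReal.le_tsum j) le_add_self)
        have h1 : hxCut (c j) (r j) x = 1 := by
          unfold hxCut
          have : (r j)⁻¹ * ‖x - c j‖ ≤ 1 := by
            rw [inv_mul_le_iff₀ (hr j)]; linarith
          rw [min_eq_left (by linarith)]; simp
        simp only [g2]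
        rw [h1, mul_one]
      · push Not at hj
        refine case0 hx0 ?_
        have := norm_le_norm_add_norm_sub (c j) x
        rw [norm_sub_rev, hcn] at this
        linarith
  have hΩm : MeasurableSet Ω₁ := by
    rw [hΩ₁, hF]
    refine measurableSet_ball.diff (MeasurableSet.insert (Set.Countable.measurableSet ?_) 0)
    refine (Set.countable_range c).mono ?_
    rintro x ⟨j, -, h⟩
    exact ⟨j, h.symm⟩
  calc ∫⁻ x in Ω₁, ENNReal.ofReal (|u x| ^ p * Metric.infDist x Ω₁ᶜ ^ (-p))
      ≤ ∫⁻ x in Ω₁, ENNReal.ofReal (18 ^ p) * (g0 x + g1 x + ∑' j, g2 j x) :=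
        setLIntegral_mono' hΩm hpt
    _ ≤ ∫⁻ x, ENNReal.ofReal (18 ^ p) * (g0 x + g1 x + ∑' j, g2 j x) :=
        setLIntegral_le_lintegral _ _
    _ = ENNReal.ofReal (18 ^ p) * ((∫⁻ x, g0 x) + (∫⁻ x, g1 x) + ∑' j, ∫⁻ x, g2 j x) := by
        have h01 : Measurable fun x => g0 x + g1 x := hg0.add hg1
        rw [lintegral_const_mul' _ _ ENNReal.ofReal_ne_top, lintegral_add_left h01,
          lintegral_add_left hg0, lintegral_tsum fun j => (hg2 j).aemeasurable]
    _ ≤ ENNReal.ofReal (18 ^ p) * (ENNReal.ofReal C1 * D + ENNReal.ofReal C2 * D +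
        ENNReal.ofReal C1 * (ENNReal.ofReal (2 ^ (p-1)) *
      ((1 + ENNReal.ofReal (10 ^ p) * ENNReal.ofReal C1) * D))) := by gcongr
    _ = T * D := by rw [hT]; ring
end

section
/- Let n ≥ 2, let e₁ ∈ ℝⁿ be the first standard basis vector, let w_j = 2^{−j} e₁ for integers j ≥ 2, and set Ω = B(0,2) \ ( {0} ∪ ⋃_{j≥2} closedBall(w_j, 2^{−2j}) ), where B(0,2) is the open ball of radius 2 centered at the origin. Then for every p with 1 < p < n, the open set Ω admits a p-Hardy inequality: there exists C > 0 such that ∫_Ω |u(x)|^p d_Ω(x)^{−p} dx ≤ C ∫_Ω ‖∇u(x)‖^p dx for every Lipschitz function u : ℝⁿ → ℝ with compact support contained in Ω. -/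
open MeasureTheory Metric ENNReal

namespace HB

local notation "𝔼" n => EuclideanSpace ℝ (Fin n)

lemma ibp {n : ℕ} (w : 𝔼 n) (φ H : (𝔼 n) → ℝ) (L : NNReal) (hφ : LipschitzWith L φ)
    (hH : ContDiff ℝ 1 H) (hHc : HasCompactSupport H) :
    Integrable (fun x => φ x * (n * H x + fderiv ℝ H x (x - w))) ∧
    Integrable (fun x => fderiv ℝ φ x (x - w) * H x) ∧
    ∫ x, φ x * (n * H x + fderiv ℝ H x (x - w)) = - ∫ x, fderiv ℝ φ x (x - w) * H x := by
  let e : Fin n → (𝔼 n) := fun i => EuclideanSpace.single i 1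
  let X : Fin n → (𝔼 n) → ℝ := fun i x => H x * (x i - w i)
  have hcoord : ∀ i, ContDiff ℝ 1 (fun x : 𝔼 n => x i - w i) := by
    intro i
    fun_prop
  have hX : ∀ i, ContDiff ℝ 1 (X i) := fun i => hH.mul (hcoord i)
  have hXc : ∀ i, HasCompactSupport (X i) := fun i => hHc.mul_right
  have hsum : ∀ y : 𝔼 n, y = ∑ i, y i • e i := by
    intro y
    ext j
    simp [e, Pi.single_apply]
  have hXd : ∀ i x, lineDeriv ℝ (X i) x (e i) = H x + fderiv ℝ H x (e i) * (x i - w i) := by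
    intro i x
    rw [((hX i).differentiable (by simp)).differentiableAt.lineDeriv_eq_fderiv]
    have h1 : HasFDerivAt (fun x : 𝔼 n => x i - w i) (EuclideanSpace.proj i : (𝔼 n) →L[ℝ] ℝ) x := by
      exact ((EuclideanSpace.proj i : (𝔼 n) →L[ℝ] ℝ).hasFDerivAt).sub_const _
    have h2 := (((hH.differentiable (by simp)) x).hasFDerivAt).mul h1
    have h3 : fderiv ℝ (X i) x = _ := h2.fderiv
    rw [h3]
    simp [e]
    ring
  have hint1 : ∀ i, Integrable (fun x => lineDeriv ℝ (X i) x (e i) * φ x) := by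
    intro i
    apply Continuous.integrable_of_hasCompactSupport
    · have : (fun x => lineDeriv ℝ (X i) x (e i)) = fun x => fderiv ℝ (X i) x (e i) := by
        ext x
        exact ((hX i).differentiable (by simp)).differentiableAt.lineDeriv_eq_fderiv
      have h2 : Continuous (fun x => lineDeriv ℝ (X i) x (e i)) := by
        rw [this]
        exact ((hX i).continuous_fderiv (by simp)).clm_apply continuous_const
      exact h2.mul hφ.continuous
    · have : (fun x => lineDeriv ℝ (X i) x (e i)) = fun x => fderiv ℝ (X i) x (e i) := by
        ext x
        exact ((hX i).differentiable (by simp)).differentiableAt.lineDeriv_eq_fderiv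
      apply HasCompactSupport.mul_right
      rw [this]
      exact (hXc i).fderiv_apply ℝ (e i)
  have hint2 : ∀ i, Integrable (fun x => lineDeriv ℝ φ x (e i) * X i x) := by
    intro i
    have := ((hX i).continuous.integrable_of_hasCompactSupport (hXc i) (μ := volume))
    have h2 := this.smul_of_top_right (hφ.memLp_lineDeriv (μ := volume) (e i))
    exact h2
  have hae : ∀ᵐ x : 𝔼 n, ∑ i, lineDeriv ℝ φ x (e i) * X i x = fderiv ℝ φ x (x - w) * H x := by
    filter_upwards [hφ.ae_differentiableAt] with x hx
    conv_rhs => rw [hsum (x - w)]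
    simp only [map_sum, map_smul, hx.lineDeriv_eq_fderiv, X, Finset.sum_mul]
    refine Finset.sum_congr rfl fun i _ => ?_
    simp
    ring
  have heq1 : ∀ x, ∑ i, lineDeriv ℝ (X i) x (e i) * φ x = φ x * (n * H x + fderiv ℝ H x (x - w)) := by
    intro x
    conv_rhs => rw [hsum (x - w)]
    simp only [map_sum, map_smul, hXd, ← Finset.sum_mul, Finset.sum_add_distrib]
    simp
    rw [mul_comm]
    congr 2
    refine Finset.sum_congr rfl fun i _ => ?_
    ring
  refine ⟨?_, ?_, ?_⟩
  · have := integrable_finsetSum Finset.univ (fun i _ => hint1 i)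
    exact this.congr (Filter.Eventually.of_forall fun x => by simpa using heq1 x)
  · have := integrable_finsetSum Finset.univ (fun i _ => hint2 i)
    refine this.congr (hae.mono fun x hx => by simpa using hx)
  · rw [← integral_congr_ae hae]
    simp_rw [← heq1]
    rw [integral_finsetSum _ (fun i _ => hint1 i), integral_finsetSum _ (fun i _ => hint2 i),
      ← Finset.sum_neg_distrib]
    refine Finset.sum_congr rfl fun i _ => ?_
    obtain ⟨D, hD⟩ := ContDiff.lipschitzWith_of_hasCompactSupport (hXc i) (hX i) (by simp)
    have h := LipschitzWith.integral_lineDeriv_mul_eq (μ := volume) hφ hD (hXc i) (- e i)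
    rw [neg_neg] at h
    rw [← h, ← integral_neg]
    congr 1
    ext x
    rw [lineDeriv_neg]
    ring

lemma exists_cutoff {n : ℕ} (K U : Set (𝔼 n)) (hK : IsCompact K) (hU : IsOpen U) (hKU : K ⊆ U) :
    ∃ χ : (𝔼 n) → ℝ, ContDiff ℝ 1 χ ∧ HasCompactSupport χ ∧ tsupport χ ⊆ U ∧
      ∀ x ∈ K, ∀ᶠ y in nhds x, χ y = 1 := by
  obtain ⟨K', hK', h1, h2⟩ := exists_compact_between hK hU hKU
  obtain ⟨f, hf1, hf2, hf3⟩ := exists_contMDiffMap_one_nhds_of_subset_interior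
    (n := 1) (modelWithCornersSelf ℝ (𝔼 n)) hK.isClosed h1
  have hsupp : Function.support f ⊆ K' := by
    intro x hx
    by_contra h
    exact hx (hf2 x h)
  have hts : tsupport f ⊆ K' := closure_minimal hsupp hK'.isClosed
  refine ⟨f, f.contMDiff.contDiff, ?_, hts.trans h2, ?_⟩
  · exact hK'.of_isClosed_subset (isClosed_tsupport _) hts
  · intro x hx
    exact (eventually_nhdsSet_iff_forall.mp hf1) x hx

lemma young {p : ℝ} (hp : 1 < p) {K a b : ℝ} (hK : 0 < K) (ha : 0 ≤ a) (hb : 0 ≤ b) :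
    K * a ^ (p - 1) * b ≤ a ^ p / 2 + K * (2 * K) ^ (p - 1) * b ^ p := by
  have hp1 : p = (p - 1) + 1 := by ring
  have key : ∀ t : ℝ, 0 ≤ t → t ^ p = t ^ (p - 1) * t := by
    intro t ht
    conv_lhs => rw [hp1]
    rw [Real.rpow_add_one' ht (by linarith)]
  have hap : 0 ≤ a ^ (p - 1) := Real.rpow_nonneg ha _
  have hbp : 0 ≤ b ^ p := Real.rpow_nonneg hb _
  by_cases h : 2 * K * b ≤ a
  · have : 0 ≤ K * (2 * K) ^ (p - 1) * b ^ p := by positivity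
    rw [key a ha]
    nlinarith
  · push Not at h
    have h1 : a ^ (p - 1) ≤ (2 * K * b) ^ (p - 1) :=
      Real.rpow_le_rpow ha h.le (by linarith)
    rw [Real.mul_rpow (by positivity) hb] at h1
    have : 0 ≤ a ^ p := Real.rpow_nonneg ha _
    rw [key b hb]
    calc K * a ^ (p - 1) * b ≤ K * ((2 * K) ^ (p - 1) * b ^ (p - 1)) * b := by gcongr
      _ ≤ _ := by nlinarith

lemma lip_abs_rpow {n : ℕ} {p : ℝ} (hp : 1 < p) (u : (𝔼 n) → ℝ) (L : NNReal)
    (hu : LipschitzWith L u) (hc : HasCompactSupport u) :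
    ∃ M, LipschitzWith M (fun x => |u x| ^ p) := by
  obtain ⟨B, hB⟩ := hu.continuous.bounded_above_of_compact_support hc
  have hB0 : 0 ≤ B := (norm_nonneg _).trans (hB 0)
  have h1 : LipschitzOnWith (Real.toNNReal (p * B ^ (p - 1))) (fun t : ℝ => |t| ^ p)
      (Set.Icc (-B) B) := by
    apply Convex.lipschitzOnWith_of_nnnorm_hasDerivWithin_le (convex_Icc _ _)
      (f' := fun x => p * |x| ^ (p - 2) * x)
    · intro x hx
      exact (hasDerivAt_abs_rpow x hp).hasDerivWithinAt
    · intro x hx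
      rw [← NNReal.coe_le_coe, Real.coe_toNNReal _ (by positivity), coe_nnnorm, Real.norm_eq_abs,
        abs_mul, abs_mul, abs_of_pos (by linarith : 0 < p), mul_assoc,
        abs_of_nonneg (Real.rpow_nonneg (abs_nonneg x) _)]
      gcongr
      have : |x| ^ (p - 2) * |x| = |x| ^ (p - 1) := by
        rw [← Real.rpow_add_one' (abs_nonneg x) (by linarith)]
        ring_nf
      rw [this]
      exact Real.rpow_le_rpow (abs_nonneg x) (abs_le.mpr hx) (by linarith)
  refine ⟨Real.toNNReal (p * B ^ (p - 1)) * L, ?_⟩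
  have := h1.comp (hu.lipschitzOnWith (s := Set.univ)) (fun x _ => abs_le.mp (hB x))
  exact lipschitzOnWith_univ.mp this


lemma core {p : ℝ} (hp : 1 < p) {K : ℝ} (hK : 0 < K) : ∃ C : ℝ, 0 < C ∧
    ∀ (n : ℕ) (w : 𝔼 n) (g g' : ℝ → ℝ) (T : Set ℝ), IsOpen T → T ⊆ Set.Ioi 0 →
      (∀ t ∈ T, HasDerivAt g (g' t) t) → ContinuousOn g' T →
      (∀ t ∈ T, 0 ≤ n * g t + t * g' t) →
      (∀ t ∈ T, |g t| * t ≤ K * (n * g t + t * g' t) ^ ((p - 1) / p)) →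
      ∀ (u : (𝔼 n) → ℝ) (L : NNReal), LipschitzWith L u → HasCompactSupport u →
      (∀ x ∈ tsupport u, ‖x - w‖ ∈ T) →
      ∫⁻ x, ENNReal.ofReal (|u x| ^ p * (n * g ‖x - w‖ + ‖x - w‖ * g' ‖x - w‖)) ≤
        ENNReal.ofReal C * ∫⁻ x, ENNReal.ofReal (‖fderiv ℝ u x‖ ^ p) := by
  have hp0 : 0 < p := by linarith
  set C₀ : ℝ := (p * K) * (2 * (p * K)) ^ (p - 1) with hC₀
  have hC₀pos : 0 < C₀ := by positivity
  refine ⟨2 * C₀, by positivity, ?_⟩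
  intro n w g g' T hT hT0 hg hg'c hD hDK u L hu huc hsupp
  set D : ℝ → ℝ := fun t => n * g t + t * g' t with hDdef
  set U : Set (𝔼 n) := (fun x => ‖x - w‖) ⁻¹' T with hU
  have hUo : IsOpen U := hT.preimage (by fun_prop)
  obtain ⟨χ, hχ, hχc, hχU, hχ1⟩ := exists_cutoff (tsupport u) U huc hUo hsupp
  set G : (𝔼 n) → ℝ := fun x => g ‖x - w‖ with hG
  have hgC : ContDiffOn ℝ 1 g T := by
    have h1 : ContDiffOn ℝ (0 + 1) g T := by
      rw [contDiffOn_succ_iff_deriv_of_isOpen hT]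
      refine ⟨fun t ht => (hg t ht).differentiableAt.differentiableWithinAt, by simp, ?_⟩
      rw [contDiffOn_zero]
      exact hg'c.congr fun t ht => (hg t ht).deriv
    simpa using h1
  have hUne : ∀ x ∈ U, x - w ≠ 0 := by
    intro x hx h
    have := hT0 hx
    simp [h] at this
  have hGC : ∀ x ∈ U, ContDiffAt ℝ 1 G x := by
    intro x hx
    have h1 : ContDiffAt ℝ 1 g ‖x - w‖ := hgC.contDiffAt (hT.mem_nhds hx)
    have h2 : ContDiffAt ℝ 1 (fun x : 𝔼 n => ‖x - w‖) x :=
      (contDiffAt_id.sub contDiffAt_const).norm ℝ (hUne x hx)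
    exact h1.comp x h2
  have hGd : ∀ x ∈ U, fderiv ℝ G x (x - w) = ‖x - w‖ * g' ‖x - w‖ := by
    intro x hx
    have h0 : DifferentiableAt ℝ (fun y : 𝔼 n => ‖y‖) (x - w) :=
      (contDiffAt_norm ℝ (hUne x hx) (n := 1)).differentiableAt (by simp)
    have h1 : HasFDerivAt (fun y : 𝔼 n => ‖y - w‖) (fderiv ℝ (fun y : 𝔼 n => ‖y‖) (x - w)) x := by
      have := h0.hasFDerivAt.comp x ((hasFDerivAt_id x).sub_const w)
      simpa [Function.comp_def] using this
    have h2 := (hg _ hx).comp_hasFDerivAt x h1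
    have h3 : fderiv ℝ G x = _ := h2.fderiv
    rw [h3]
    simp only [_root_.smul_apply, smul_eq_mul]
    rw [DifferentiableAt.fderiv_norm_self h0]
    ring
  set H : (𝔼 n) → ℝ := fun x => χ x * G x with hH
  have hHC : ContDiff ℝ 1 H := by
    rw [contDiff_iff_contDiffAt]
    intro x
    by_cases hx : x ∈ U
    · exact hχ.contDiffAt.mul (hGC x hx)
    · have hx' : x ∉ tsupport χ := fun h => hx (hχU h)
      have : H =ᶠ[nhds x] fun _ => 0 := by
        filter_upwards [notMem_tsupport_iff_eventuallyEq.mp hx'] with y hy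
        simp [hH, hy]
      exact contDiffAt_const.congr_of_eventuallyEq this
  have hHc : HasCompactSupport H := hχc.mul_right
  obtain ⟨M, hM⟩ := lip_abs_rpow hp u L hu huc
  obtain ⟨hi1, hi2, hi3⟩ := ibp w (fun x => |u x| ^ p) H M hM hHC hHc
  have hA : ∀ x, |u x| ^ p * (n * H x + fderiv ℝ H x (x - w)) = |u x| ^ p * D ‖x - w‖ := by
    intro x
    by_cases hx : x ∈ tsupport u
    · have h1 : H =ᶠ[nhds x] G := by
        filter_upwards [hχ1 x hx] with y hy
        simp [hH, hy]
      rw [h1.fderiv_eq, h1.eq_of_nhds, hGd x (hsupp x hx)]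
    · have : u x = 0 := image_eq_zero_of_notMem_tsupport hx
      simp [this, Real.zero_rpow hp0.ne']
  simp_rw [hA] at hi1 hi3
  have hA0 : ∀ x, 0 ≤ |u x| ^ p * D ‖x - w‖ := by
    intro x
    by_cases hx : x ∈ tsupport u
    · exact mul_nonneg (by positivity) (hD _ (hsupp x hx))
    · have : u x = 0 := image_eq_zero_of_notMem_tsupport hx
      simp [this, Real.zero_rpow hp0.ne']
  have hR : ∀ᵐ x : 𝔼 n, - (fderiv ℝ (fun x => |u x| ^ p) x (x - w) * H x) ≤
      (|u x| ^ p * D ‖x - w‖) / 2 + C₀ * ‖fderiv ℝ u x‖ ^ p := by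
    filter_upwards [hu.ae_differentiableAt] with x hxd
    have h1 : HasFDerivAt (fun x => |u x| ^ p) _ x :=
      (hasDerivAt_abs_rpow (u x) hp).comp_hasFDerivAt x hxd.hasFDerivAt
    rw [h1.fderiv]
    by_cases hx : x ∈ tsupport u
    · have hHx : H x = g ‖x - w‖ := by
        simp [hH, hG, (hχ1 x hx).self_of_nhds]
      have hTx := hsupp x hx
      have hDx := hD _ hTx
      have hDKx := hDK _ hTx
      change 0 ≤ D ‖x - w‖ at hDx
      change |g ‖x - w‖| * ‖x - w‖ ≤ K * (D ‖x - w‖) ^ ((p - 1) / p) at hDKx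
      rw [hHx]
      set ρ := ‖x - w‖ with hρ
      have hy := young hp (K := p * K) (a := |u x| * (D ρ) ^ (1 / p)) (b := ‖fderiv ℝ u x‖)
        (by positivity) (by positivity) (by positivity)
      have e1 : (|u x| * (D ρ) ^ (1 / p)) ^ p = |u x| ^ p * D ρ := by
        rw [Real.mul_rpow (by positivity) (by positivity), ← Real.rpow_mul hDx]
        rw [one_div_mul_cancel hp0.ne', Real.rpow_one]
      have e2 : (|u x| * (D ρ) ^ (1 / p)) ^ (p - 1) =
          |u x| ^ (p - 1) * (D ρ) ^ ((p - 1) / p) := by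
        rw [Real.mul_rpow (by positivity) (by positivity), ← Real.rpow_mul hDx]
        congr 2
        ring
      rw [e1, e2] at hy
      refine le_trans ?_ hy
      refine (neg_le_abs _).trans ?_
      have e3 : |u x| ^ (p - 2) * |u x| = |u x| ^ (p - 1) := by
        rw [← Real.rpow_add_one' (abs_nonneg _) (by linarith)]
        ring_nf
      have e4 : |fderiv ℝ u x (x - w)| ≤ ‖fderiv ℝ u x‖ * ρ := by
        simpa using (fderiv ℝ u x).le_opNorm (x - w)
      simp only [_root_.smul_apply, smul_eq_mul, abs_mul]
      rw [abs_of_pos hp0, abs_of_nonneg (Real.rpow_nonneg (abs_nonneg _) _)]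
      calc p * |u x| ^ (p - 2) * |u x| * |fderiv ℝ u x (x - w)| * |g ρ|
          = p * |u x| ^ (p - 1) * |fderiv ℝ u x (x - w)| * |g ρ| := by rw [← e3]; ring
        _ ≤ p * |u x| ^ (p - 1) * (‖fderiv ℝ u x‖ * ρ) * |g ρ| := by gcongr
        _ = p * |u x| ^ (p - 1) * ‖fderiv ℝ u x‖ * (|g ρ| * ρ) := by ring
        _ ≤ p * |u x| ^ (p - 1) * ‖fderiv ℝ u x‖ * (K * (D ρ) ^ ((p - 1) / p)) := by gcongr
        _ = _ := by ring
    · have h0 : u x = 0 := image_eq_zero_of_notMem_tsupport hx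
      simp only [h0, abs_zero, Real.zero_rpow hp0.ne']
      simp
      positivity
  by_cases htop : ∫⁻ x, ENNReal.ofReal (‖fderiv ℝ u x‖ ^ p) = ⊤
  · rw [htop, ENNReal.mul_top (by simpa using hC₀pos)]
    exact le_top
  have hBint : Integrable (fun x => ‖fderiv ℝ u x‖ ^ p) := by
    refine ⟨?_, ?_⟩
    · exact ((measurable_fderiv ℝ u).norm.pow_const p).aestronglyMeasurable
    · rw [hasFiniteIntegral_iff_ofReal (Filter.Eventually.of_forall fun x => by positivity)]
      exact lt_top_iff_ne_top.mpr htop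
  have hle : ∫ x, |u x| ^ p * D ‖x - w‖ ≤
      ∫ x, ((|u x| ^ p * D ‖x - w‖) / 2 + C₀ * ‖fderiv ℝ u x‖ ^ p) := by
    rw [hi3, ← integral_neg]
    exact integral_mono_ae hi2.neg ((hi1.div_const 2).add (hBint.const_mul C₀)) hR
  rw [integral_add (hi1.div_const 2) (hBint.const_mul C₀), integral_div, integral_const_mul] at hle
  rw [← ofReal_integral_eq_lintegral_ofReal hi1 (Filter.Eventually.of_forall hA0),
    ← ofReal_integral_eq_lintegral_ofReal hBint (Filter.Eventually.of_forall fun x => by positivity),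
    ← ENNReal.ofReal_mul (by positivity)]
  apply ENNReal.ofReal_le_ofReal
  linarith


lemma alg {p c s W : ℝ} (hp : 1 < p) (hc : 0 < c) (hs : 0 < s) (hW : 0 < W) (hW1 : W ≤ 1) :
    W * s ^ (1 - p) ≤ c ^ (-((p - 1) / p)) * (c * (W * s ^ (-p))) ^ ((p - 1) / p) := by
  have hp0 : 0 < p := by linarith
  rw [Real.mul_rpow hc.le (by positivity), ← mul_assoc, ← Real.rpow_add hc, neg_add_cancel,
    Real.rpow_zero, one_mul, Real.mul_rpow hW.le (by positivity), ← Real.rpow_mul hs.le]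
  have : -p * ((p - 1) / p) = 1 - p := by field_simp; ring
  rw [this]
  gcongr
  calc W = W ^ (1 : ℝ) := (Real.rpow_one W).symm
    _ ≤ _ := Real.rpow_le_rpow_of_exponent_ge hW hW1 (by rw [div_le_one hp0]; linarith)

lemma rescale {C c : ℝ} (hc : 0 < c) {a b : ℝ≥0∞}
    (h : ENNReal.ofReal c * a ≤ ENNReal.ofReal C * b) : a ≤ ENNReal.ofReal (c⁻¹ * C) * b := by
  calc a = ENNReal.ofReal c⁻¹ * (ENNReal.ofReal c * a) := by
        rw [← mul_assoc, ← ENNReal.ofReal_mul (by positivity), inv_mul_cancel₀ hc.ne']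
        simp
    _ ≤ ENNReal.ofReal c⁻¹ * (ENNReal.ofReal C * b) := by gcongr
    _ = _ := by rw [← mul_assoc, ← ENNReal.ofReal_mul (by positivity)]

lemma hardy_pt {n : ℕ} {p : ℝ} (hp : 1 < p) (hpn : p < n) : ∃ C : ℝ, 0 < C ∧
    ∀ (w : 𝔼 n) (u : (𝔼 n) → ℝ) (L : NNReal), LipschitzWith L u → HasCompactSupport u →
      (∀ x ∈ tsupport u, x ≠ w) →
      ∫⁻ x, ENNReal.ofReal (|u x| ^ p * ‖x - w‖ ^ (-p)) ≤
        ENNReal.ofReal C * ∫⁻ x, ENNReal.ofReal (‖fderiv ℝ u x‖ ^ p) := by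
  have hc : (0 : ℝ) < n - p := by linarith
  obtain ⟨C, hC, h⟩ := core hp (K := ((n : ℝ) - p) ^ (-((p - 1) / p))) (by positivity)
  refine ⟨((n : ℝ) - p)⁻¹ * C, by positivity, ?_⟩
  intro w u L hu huc hs
  apply rescale hc
  have hD : ∀ t ∈ Set.Ioi (0 : ℝ), n * t ^ (-p) + t * (-p * t ^ (-p - 1)) = (n - p) * t ^ (-p) := by
    intro t ht
    have : t ^ (-p) = t ^ (-p - 1) * t := by
      rw [← Real.rpow_add_one (ne_of_gt ht)]; ring_nf
    rw [this]
    ring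
  have := h n w (fun t => t ^ (-p)) (fun t => -p * t ^ (-p - 1)) (Set.Ioi 0) isOpen_Ioi subset_rfl
    (fun t ht => Real.hasDerivAt_rpow_const (Or.inl (ne_of_gt ht)))
    (by
      apply ContinuousOn.mul continuousOn_const
      exact continuousOn_id.rpow_const (fun t ht => Or.inl (ne_of_gt ht)))
    (by
      intro t ht
      rw [hD t ht]
      have : 0 < t := ht
      positivity)
    (by
      intro t ht
      have ht' : 0 < t := ht
      rw [hD t ht, abs_of_pos (by positivity), ← Real.rpow_add_one ht'.ne']
      have := alg hp hc ht' one_pos le_rfl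
      rw [one_mul, one_mul] at this
      rw [show -p + 1 = 1 - p by ring]
      exact this)
    u L hu huc (fun x hx => by simpa [sub_eq_zero] using hs x hx)
  refine le_trans (le_of_eq ?_) this
  rw [← lintegral_const_mul' _ _ ENNReal.ofReal_ne_top]
  congr 1
  ext x
  rw [← ENNReal.ofReal_mul hc.le]
  congr 1
  by_cases hx : x ∈ tsupport u
  · rw [hD _ (by simpa [sub_eq_zero] using hs x hx)]
    ring
  · simp [image_eq_zero_of_notMem_tsupport hx, Real.zero_rpow (by linarith : p ≠ 0)]

lemma hardy_in {n : ℕ} {p : ℝ} (hp : 1 < p) : ∃ C : ℝ, 0 < C ∧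
    ∀ (u : (𝔼 n) → ℝ) (L : NNReal), LipschitzWith L u → HasCompactSupport u →
      (∀ x ∈ tsupport u, 0 < ‖x‖ ∧ ‖x‖ < 2) →
      ∫⁻ x, ENNReal.ofReal (|u x| ^ p * (‖x‖ * (2 - ‖x‖) ^ (-p))) ≤
        ENNReal.ofReal C * ∫⁻ x, ENNReal.ofReal (‖fderiv ℝ u x‖ ^ p) := by
  have hc : (0 : ℝ) < p - 1 := by linarith
  obtain ⟨C, hC, h⟩ := core hp (K := 2 * (2 * (p - 1)) ^ (-((p - 1) / p))) (by positivity)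
  refine ⟨(p - 1)⁻¹ * C, by positivity, ?_⟩
  intro u L hu huc hs
  apply rescale hc
  have hD : ∀ t ∈ Set.Ioo (0 : ℝ) 2, (p - 1) * (t * (2 - t) ^ (-p)) ≤
      n * (2 - t) ^ (1 - p) + t * ((p - 1) * (2 - t) ^ (-p)) := by
    rintro t ⟨ht, ht2⟩
    have : 0 < 2 - t := by linarith
    have : 0 ≤ n * (2 - t) ^ (1 - p) := by positivity
    linarith
  have hD0 : ∀ t ∈ Set.Ioo (0 : ℝ) 2, 0 ≤ (p - 1) * (t * (2 - t) ^ (-p)) := by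
    rintro t ⟨ht, ht2⟩
    have : 0 < 2 - t := by linarith
    positivity
  have := h n 0 (fun t => (2 - t) ^ (1 - p)) (fun t => (p - 1) * (2 - t) ^ (-p)) (Set.Ioo 0 2)
    isOpen_Ioo (fun t ht => ht.1)
    (by
      rintro t ⟨ht, ht2⟩
      have h1 := ((hasDerivAt_id t).const_sub 2).rpow_const (p := 1 - p)
        (Or.inl (by simp; linarith))
      simp only [id] at h1
      refine h1.congr_deriv ?_
      rw [show 1 - p - 1 = -p by ring]
      ring)
    (by
      apply ContinuousOn.mul continuousOn_const
      exact (continuousOn_const.sub continuousOn_id).rpow_const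
        (fun t ht => Or.inl (by simp; linarith [ht.2])))
    (fun t ht => (hD0 t ht).trans (hD t ht))
    (by
      intro t ht
      have ht' : 0 < t := ht.1
      have ht2 : 0 < 2 - t := by linarith [ht.2]
      rw [abs_of_pos (by positivity)]
      have h1 := alg (c := 2 * (p - 1)) (W := t / 2) hp (by positivity) ht2 (by positivity)
        (by linarith)
      have h2 : 2 * (p - 1) * (t / 2 * (2 - t) ^ (-p)) = (p - 1) * (t * (2 - t) ^ (-p)) := by ring
      rw [h2] at h1
      have h3 : ((p - 1) * (t * (2 - t) ^ (-p))) ^ ((p - 1) / p) ≤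
        (n * (2 - t) ^ (1 - p) + t * ((p - 1) * (2 - t) ^ (-p))) ^ ((p - 1) / p) :=
        Real.rpow_le_rpow (hD0 t ht) (hD t ht) (by positivity)
      calc (2 - t) ^ (1 - p) * t = 2 * (t / 2 * (2 - t) ^ (1 - p)) := by ring
        _ ≤ 2 * ((2 * (p - 1)) ^ (-((p - 1) / p)) * ((p - 1) * (t * (2 - t) ^ (-p))) ^ ((p - 1) / p)) := by
          gcongr
        _ ≤ 2 * ((2 * (p - 1)) ^ (-((p - 1) / p)) * (n * (2 - t) ^ (1 - p) + t * ((p - 1) * (2 - t) ^ (-p))) ^ ((p - 1) / p)) := by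
          gcongr
        _ = _ := by ring)
    u L hu huc (fun x hx => by simpa using hs x hx)
  refine le_trans ?_ this
  rw [← lintegral_const_mul' _ _ ENNReal.ofReal_ne_top]
  apply lintegral_mono
  intro x
  simp only
  rw [← ENNReal.ofReal_mul hc.le]
  apply ENNReal.ofReal_le_ofReal
  by_cases hx : x ∈ tsupport u
  · have := hD ‖x‖ (hs x hx)
    simp only [sub_zero]
    calc _ = |u x| ^ p * ((p - 1) * (‖x‖ * (2 - ‖x‖) ^ (-p))) := by ring
      _ ≤ _ := by gcongr
  · simp [image_eq_zero_of_notMem_tsupport hx, Real.zero_rpow (by linarith : p ≠ 0)]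

lemma hardy_out_aux {n : ℕ} {p : ℝ} (hp : 1 < p) : ∃ C : ℝ, 0 < C ∧
    ∀ (w : 𝔼 n) (r : ℝ) (u : (𝔼 n) → ℝ) (L : NNReal), 0 < r → 1 ≤ n →
      LipschitzWith L u → HasCompactSupport u →
      (∀ x ∈ tsupport u, r < ‖x - w‖) →
      ∫⁻ x, ENNReal.ofReal (|u x| ^ p * ((r / ‖x - w‖) ^ ((n : ℝ) - 1) * (‖x - w‖ - r) ^ (-p))) ≤
        ENNReal.ofReal C * ∫⁻ x, ENNReal.ofReal (‖fderiv ℝ u x‖ ^ p) := by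
  have hc : (0 : ℝ) < p - 1 := by linarith
  obtain ⟨C, hC, h⟩ := core hp (K := (p - 1) ^ (-((p - 1) / p))) (by positivity)
  refine ⟨(p - 1)⁻¹ * C, by positivity, ?_⟩
  intro w r u L hr hn hu huc hs
  have hn' : (1 : ℝ) ≤ n := by exact_mod_cast hn
  apply rescale hc
  set N : ℝ := (n : ℝ) with hN
  have hW : ∀ t, 0 < t → (r / t) ^ (N - 1) = r ^ (N - 1) * (t ^ (-N) * t) := by
    intro t ht
    rw [Real.div_rpow hr.le ht.le, div_eq_mul_inv, ← Real.rpow_neg ht.le, ← Real.rpow_add_one ht.ne']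
    ring_nf
  have hD : ∀ t ∈ Set.Ioi r, N * (- (r ^ (N - 1) * ((t - r) ^ (1 - p) * t ^ (-N)))) +
      t * (- (r ^ (N - 1) * ((1 - p) * (t - r) ^ (-p) * t ^ (-N) +
        (t - r) ^ (1 - p) * (-N * t ^ (-N - 1))))) = (p - 1) * ((r / t) ^ (N - 1) * (t - r) ^ (-p)) := by
    intro t ht
    have ht0 : 0 < t := hr.trans ht
    rw [hW t ht0]
    have : t ^ (-N) = t ^ (-N - 1) * t := by
      rw [← Real.rpow_add_one ht0.ne']; ring_nf
    rw [this]
    ring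
  have := h n w (fun t => - (r ^ (N - 1) * ((t - r) ^ (1 - p) * t ^ (-N))))
    (fun t => - (r ^ (N - 1) * ((1 - p) * (t - r) ^ (-p) * t ^ (-N) +
        (t - r) ^ (1 - p) * (-N * t ^ (-N - 1))))) (Set.Ioi r) isOpen_Ioi
    (fun t ht => hr.trans ht)
    (by
      intro t ht
      have ht0 : 0 < t := hr.trans ht
      have h1 := ((hasDerivAt_id t).sub_const r).rpow_const (p := 1 - p)
        (Or.inl (sub_ne_zero.mpr (ne_of_gt ht)))
      have h2 := Real.hasDerivAt_rpow_const (x := t) (p := -N) (Or.inl ht0.ne')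
      have h3 := ((h1.mul h2).const_mul (r ^ (N - 1))).neg
      refine h3.congr_deriv ?_
      rw [show 1 - p - 1 = -p by ring]
      simp only [id]
      ring)
    (by
      have hne : ∀ t ∈ Set.Ioi r, t - r ≠ 0 := fun t ht => sub_ne_zero.mpr (ne_of_gt ht)
      have hne0 : ∀ t ∈ Set.Ioi r, t ≠ 0 := fun t ht => (hr.trans ht).ne'
      have c1 : ∀ q : ℝ, ContinuousOn (fun t : ℝ => (t - r) ^ q) (Set.Ioi r) := fun q =>
        (continuousOn_id.sub continuousOn_const).rpow_const (fun t ht => Or.inl (hne t ht))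
      have c2 : ∀ q : ℝ, ContinuousOn (fun t : ℝ => t ^ q) (Set.Ioi r) := fun q =>
        continuousOn_id.rpow_const (fun t ht => Or.inl (hne0 t ht))
      exact (continuousOn_const.mul (((continuousOn_const.mul (c1 _)).mul (c2 _)).add
        ((c1 _).mul (continuousOn_const.mul (c2 _))))).neg)
    (by
      intro t ht
      rw [hD t ht]
      have ht0 : 0 < t := hr.trans ht
      have : 0 < t - r := sub_pos.mpr ht
      positivity)
    (by
      intro t ht
      have ht0 : 0 < t := hr.trans ht
      have htr : 0 < t - r := sub_pos.mpr ht
      rw [hD t ht, abs_neg, abs_of_pos (by positivity)]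
      have := alg (W := (r / t) ^ (N - 1)) hp hc htr (by positivity)
        (Real.rpow_le_one (by positivity) ((div_le_one ht0).mpr (le_of_lt ht)) (by linarith))
      refine le_trans (le_of_eq ?_) this
      rw [hW t ht0]
      ring)
    u L hu huc hs
  refine le_trans (le_of_eq ?_) this
  rw [← lintegral_const_mul' _ _ ENNReal.ofReal_ne_top]
  congr 1
  ext x
  rw [← ENNReal.ofReal_mul hc.le]
  congr 1
  by_cases hx : x ∈ tsupport u
  · rw [hD _ (hs x hx)]
    ring
  · simp [image_eq_zero_of_notMem_tsupport hx, Real.zero_rpow (by linarith : p ≠ 0)]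

lemma hardy_out {n : ℕ} {p : ℝ} (hp : 1 < p) (hpn : p < n) : ∃ C : ℝ, 0 < C ∧
    ∀ (w : 𝔼 n) (r : ℝ) (u : (𝔼 n) → ℝ) (L : NNReal), 0 < r →
      LipschitzWith L u → HasCompactSupport u →
      (∀ x ∈ tsupport u, r < ‖x - w‖) →
      ∫⁻ x, ENNReal.ofReal (|u x| ^ p * (‖x - w‖ - r) ^ (-p)) ≤
        ENNReal.ofReal C * ∫⁻ x, ENNReal.ofReal (‖fderiv ℝ u x‖ ^ p) := by
  have hp0 : 0 < p := by linarith
  obtain ⟨C₁, hC₁, h₁⟩ := hardy_pt hp hpn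
  obtain ⟨C₂, hC₂, h₂⟩ := hardy_out_aux (n := n) hp
  have hn1 : (1 : ℝ) < n := by linarith
  refine ⟨2 ^ p * C₁ + 2 ^ ((n : ℝ) - 1) * C₂, by positivity, ?_⟩
  intro w r u L hr hu huc hs
  have k1 := h₁ w u L hu huc (fun x hx h => by
    have := hs x hx
    simp [h] at this
    linarith)
  have k2 := h₂ w r u L hr (by exact_mod_cast hn1.le) hu huc hs
  have hm : Measurable u := hu.continuous.measurable
  calc ∫⁻ x, ENNReal.ofReal (|u x| ^ p * (‖x - w‖ - r) ^ (-p))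
      ≤ ∫⁻ x, (ENNReal.ofReal (2 ^ p) * ENNReal.ofReal (|u x| ^ p * ‖x - w‖ ^ (-p)) +
        ENNReal.ofReal (2 ^ ((n : ℝ) - 1)) * ENNReal.ofReal
          (|u x| ^ p * ((r / ‖x - w‖) ^ ((n : ℝ) - 1) * (‖x - w‖ - r) ^ (-p)))) := by
        apply lintegral_mono
        intro x
        by_cases hx : x ∈ tsupport u
        swap
        · simp [image_eq_zero_of_notMem_tsupport hx, Real.zero_rpow (by linarith : p ≠ 0)]
        have hrx := hs x hx
        simp only
        set t := ‖x - w‖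
        have ht0 : 0 < t := hr.trans hrx
        have htr : 0 < t - r := by linarith
        by_cases h2 : 2 * r ≤ t
        · refine le_trans ?_ le_self_add
          rw [← ENNReal.ofReal_mul (by positivity)]
          apply ENNReal.ofReal_le_ofReal
          have h3 : (t - r) ^ (-p) ≤ (t / 2) ^ (-p) :=
            Real.rpow_le_rpow_of_nonpos (by positivity) (by linarith) (by linarith)
          have h4 : (t / 2) ^ (-p) = 2 ^ p * t ^ (-p) := by
            rw [Real.div_rpow ht0.le (by norm_num), Real.rpow_neg (by norm_num : (0 : ℝ) ≤ 2)]
            field_simp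
          rw [h4] at h3
          calc _ ≤ |u x| ^ p * (2 ^ p * t ^ (-p)) := by gcongr
            _ = _ := by ring
        · refine le_trans ?_ le_add_self
          rw [← ENNReal.ofReal_mul (by positivity)]
          apply ENNReal.ofReal_le_ofReal
          have h3 : 1 ≤ (2 : ℝ) ^ ((n : ℝ) - 1) * (r / t) ^ ((n : ℝ) - 1) := by
            rw [← Real.mul_rpow (by norm_num) (by positivity)]
            apply Real.one_le_rpow _ (by linarith)
            rw [← mul_div_assoc, le_div_iff₀ ht0]
            linarith
          calc _ = 1 * (|u x| ^ p * (t - r) ^ (-p)) := by ring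
            _ ≤ ((2 : ℝ) ^ ((n : ℝ) - 1) * (r / t) ^ ((n : ℝ) - 1)) * (|u x| ^ p * (t - r) ^ (-p)) := by gcongr
            _ = _ := by ring
    _ = ENNReal.ofReal (2 ^ p) * (∫⁻ x, ENNReal.ofReal (|u x| ^ p * ‖x - w‖ ^ (-p))) +
        ENNReal.ofReal (2 ^ ((n : ℝ) - 1)) * ∫⁻ x, ENNReal.ofReal
          (|u x| ^ p * ((r / ‖x - w‖) ^ ((n : ℝ) - 1) * (‖x - w‖ - r) ^ (-p))) := by
        rw [lintegral_add_left (by fun_prop), lintegral_const_mul' _ _ ENNReal.ofReal_ne_top,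
          lintegral_const_mul' _ _ ENNReal.ofReal_ne_top]
    _ ≤ _ := by
        rw [ENNReal.ofReal_add (by positivity) (by positivity),
          ENNReal.ofReal_mul (by positivity), ENNReal.ofReal_mul (by positivity), add_mul,
          mul_assoc, mul_assoc]
        gcongr


lemma add_rpow_le {p a b : ℝ} (hp : 0 < p) (ha : 0 ≤ a) (hb : 0 ≤ b) :
    (a + b) ^ p ≤ 2 ^ p * (a ^ p + b ^ p) := by
  have h1 : 0 ≤ a ^ p := by positivity
  have h2 : 0 ≤ b ^ p := by positivity
  rcases le_total a b with h | h
  · calc (a + b) ^ p ≤ (2 * b) ^ p := by gcongr; linarith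
      _ = 2 ^ p * b ^ p := Real.mul_rpow (by norm_num) hb
      _ ≤ _ := by gcongr; linarith
  · calc (a + b) ^ p ≤ (2 * a) ^ p := by gcongr; linarith
      _ = 2 ^ p * a ^ p := Real.mul_rpow (by norm_num) ha
      _ ≤ _ := by gcongr; linarith

lemma near_norm {n : ℕ} {w x : 𝔼 n} {a : ℝ} (hw : ‖w‖ = a)
    (hx : ‖x - w‖ ≤ 5 / 16 * a) : 11 / 16 * a ≤ ‖x‖ ∧ ‖x‖ ≤ 21 / 16 * a := by
  have h1 : ‖w‖ ≤ ‖x‖ + ‖x - w‖ := by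
    have := norm_sub_le x (x - w)
    simpa using this
  have h2 : ‖x‖ ≤ ‖x - w‖ + ‖w‖ := by
    have := norm_add_le (x - w) w
    simpa using this
  constructor <;> linarith

lemma loc {n : ℕ} {p : ℝ} (hp : 1 < p) (hpn : p < n) : ∃ C : ℝ, 0 < C ∧
    ∀ (w : 𝔼 n) (a r : ℝ) (u : (𝔼 n) → ℝ) (L : NNReal), 0 < r → 0 < a → ‖w‖ = a →
      LipschitzWith L u → HasCompactSupport u →
      (∀ x ∈ tsupport u, r < ‖x - w‖) →
      ∫⁻ x in closedBall w (9 / 32 * a), ENNReal.ofReal (|u x| ^ p * (‖x - w‖ - r) ^ (-p)) ≤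
        ENNReal.ofReal C * ∫⁻ x in closedBall w (5 / 16 * a),
          (ENNReal.ofReal (‖fderiv ℝ u x‖ ^ p) + ENNReal.ofReal (|u x| ^ p * ‖x‖ ^ (-p))) := by
  have hp0 : 0 < p := by linarith
  obtain ⟨C, hC, h⟩ := hardy_out hp hpn
  refine ⟨C * (2 ^ p * 42 ^ p), by positivity, ?_⟩
  intro w a r u L hr ha hw hu huc hs
  set φ : (𝔼 n) → ℝ := fun x => max 0 (min 1 (10 - 32 / a * ‖x - w‖)) with hφ
  have hφ0 : ∀ x, 0 ≤ φ x := fun x => le_max_left _ _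
  have hφ1 : ∀ x, φ x ≤ 1 := fun x => max_le zero_le_one (min_le_left _ _)
  have hφL : LipschitzWith (Real.toNNReal (32 / a)) φ := by
    have h1 : LipschitzWith (Real.toNNReal (32 / a)) (fun x : 𝔼 n => 10 - 32 / a * ‖x - w‖) := by
      apply LipschitzWith.of_dist_le_mul
      intro x y
      rw [Real.coe_toNNReal _ (by positivity), Real.dist_eq, dist_eq_norm]
      have h2 : (10 - 32 / a * ‖x - w‖) - (10 - 32 / a * ‖y - w‖) =
        - (32 / a * (‖x - w‖ - ‖y - w‖)) := by ring
      rw [h2, abs_neg, abs_mul, abs_of_pos (by positivity : 0 < 32 / a)]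
      gcongr
      have := abs_norm_sub_norm_le (x - w) (y - w)
      simpa using this
    exact (h1.const_min 1).const_max 0
  have hφin : ∀ x ∈ closedBall w (9 / 32 * a), φ x = 1 := by
    intro x hx
    rw [mem_closedBall, dist_eq_norm] at hx
    have : 32 / a * ‖x - w‖ ≤ 9 := by
      rw [div_mul_eq_mul_div, div_le_iff₀ ha]
      linarith
    simp only [hφ]
    rw [min_eq_left (by linarith), max_eq_right (by norm_num)]
  have hφout : ∀ x, x ∉ closedBall w (5 / 16 * a) → φ x = 0 := by
    intro x hx
    rw [mem_closedBall, dist_eq_norm, not_le] at hx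
    have : 10 ≤ 32 / a * ‖x - w‖ := by
      rw [div_mul_eq_mul_div, le_div_iff₀ ha]
      linarith
    simp only [hφ]
    exact max_eq_left ((min_le_right _ _).trans (by linarith))
  obtain ⟨B, hB⟩ := hu.continuous.bounded_above_of_compact_support huc
  have hB0 : 0 ≤ B := (norm_nonneg _).trans (hB 0)
  set v : (𝔼 n) → ℝ := fun x => φ x * u x with hv
  have hvL : LipschitzWith (L + Real.toNNReal B * Real.toNNReal (32 / a)) v := by
    apply LipschitzWith.of_dist_le_mul
    intro x y
    have e1 := hu.dist_le_mul x y
    have e2 := hφL.dist_le_mul x y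
    rw [Real.dist_eq] at e1 e2 ⊢
    have e3 : v x - v y = φ x * (u x - u y) + u y * (φ x - φ y) := by simp only [hv]; ring
    rw [e3]
    refine (abs_add_le _ _).trans ?_
    rw [abs_mul, abs_mul, abs_of_nonneg (hφ0 x)]
    push_cast
    rw [Real.coe_toNNReal B hB0]
    have := hB y
    rw [Real.norm_eq_abs] at this
    calc φ x * |u x - u y| + |u y| * |φ x - φ y| ≤
        1 * (L * dist x y) + B * (Real.toNNReal (32 / a) * dist x y) := by
          gcongr
          exact hφ1 x
      _ = _ := by ring
  have hvc : HasCompactSupport v := huc.mul_left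
  have hvt : tsupport v ⊆ tsupport u := tsupport_mul_subset_right
  have hvb : tsupport v ⊆ closedBall w (5 / 16 * a) := by
    apply closure_minimal _ isClosed_closedBall
    intro x hx
    by_contra hh
    exact hx (by simp [hv, hφout x hh])
  have k := h w r v _ hr hvL hvc (fun x hx => hs x (hvt hx))
  have step1 : ∫⁻ x in closedBall w (9 / 32 * a), ENNReal.ofReal (|u x| ^ p * (‖x - w‖ - r) ^ (-p)) ≤
      ∫⁻ x, ENNReal.ofReal (|v x| ^ p * (‖x - w‖ - r) ^ (-p)) := by
    refine le_trans ?_ (setLIntegral_le_lintegral (closedBall w (9 / 32 * a)) _)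
    apply setLIntegral_mono' measurableSet_closedBall
    intro x hx
    simp [hv, hφin x hx]
  have step2 : ∫⁻ x, ENNReal.ofReal (‖fderiv ℝ v x‖ ^ p) ≤
      ENNReal.ofReal (2 ^ p * 42 ^ p) * ∫⁻ x in closedBall w (5 / 16 * a),
          (ENNReal.ofReal (‖fderiv ℝ u x‖ ^ p) + ENNReal.ofReal (|u x| ^ p * ‖x‖ ^ (-p))) := by
    rw [← lintegral_const_mul' _ _ ENNReal.ofReal_ne_top,
      ← lintegral_indicator measurableSet_closedBall]
    apply lintegral_mono_ae
    filter_upwards [hu.ae_differentiableAt, hφL.ae_differentiableAt] with x hx1 hx2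
    by_cases hx : x ∈ closedBall w (5 / 16 * a)
    swap
    · have : x ∉ Function.support (fderiv ℝ v) := fun h => hx (hvb (support_fderiv_subset ℝ h))
      rw [Function.notMem_support] at this
      simp [this, Real.zero_rpow hp0.ne']
    rw [Set.indicator_of_mem hx, ← ENNReal.ofReal_add (by positivity) (by positivity),
      ← ENNReal.ofReal_mul (by positivity)]
    apply ENNReal.ofReal_le_ofReal
    rw [mem_closedBall, dist_eq_norm] at hx
    obtain ⟨hn1, hn2⟩ := near_norm hw hx
    have hx0 : 0 < ‖x‖ := by
      refine lt_of_lt_of_le ?_ hn1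
      positivity
    have hd : fderiv ℝ v x = _ := (hx2.hasFDerivAt.mul hx1.hasFDerivAt).fderiv
    have hle : ‖fderiv ℝ v x‖ ≤ ‖fderiv ℝ u x‖ + 42 * (|u x| / ‖x‖) := by
      rw [hd]
      refine (norm_add_le _ _).trans ?_
      rw [norm_smul, norm_smul, Real.norm_eq_abs, Real.norm_eq_abs, abs_of_nonneg (hφ0 x)]
      have h5 := norm_fderiv_le_of_lipschitz ℝ hφL (x₀ := x)
      rw [Real.coe_toNNReal _ (by positivity)] at h5
      have h6 : 32 / a ≤ 42 / ‖x‖ := by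
        rw [div_le_div_iff₀ ha hx0]
        linarith
      calc φ x * ‖fderiv ℝ u x‖ + |u x| * ‖fderiv ℝ φ x‖
          ≤ 1 * ‖fderiv ℝ u x‖ + |u x| * (42 / ‖x‖) := by
            gcongr
            · exact hφ1 x
            · exact h5.trans h6
        _ = _ := by ring
    have h42 : (1 : ℝ) ≤ 42 ^ p := Real.one_le_rpow (by norm_num) hp0.le
    calc ‖fderiv ℝ v x‖ ^ p ≤ (‖fderiv ℝ u x‖ + 42 * (|u x| / ‖x‖)) ^ p := by gcongr
      _ ≤ 2 ^ p * (‖fderiv ℝ u x‖ ^ p + (42 * (|u x| / ‖x‖)) ^ p) :=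
        add_rpow_le hp0 (by positivity) (by positivity)
      _ = 2 ^ p * (1 * ‖fderiv ℝ u x‖ ^ p + 42 ^ p * (|u x| ^ p * ‖x‖ ^ (-p))) := by
        rw [Real.mul_rpow (by norm_num) (by positivity), Real.div_rpow (by positivity) hx0.le,
          Real.rpow_neg hx0.le, one_mul, div_eq_mul_inv]
      _ ≤ 2 ^ p * (42 ^ p * ‖fderiv ℝ u x‖ ^ p + 42 ^ p * (|u x| ^ p * ‖x‖ ^ (-p))) := by gcongr
      _ = _ := by ring
  calc _ ≤ _ := step1
    _ ≤ _ := k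
    _ ≤ _ := mul_le_mul_right step2 _
    _ = _ := by rw [← mul_assoc, ← ENNReal.ofReal_mul hC.le]


lemma near_disj {n : ℕ} {e : 𝔼 n} (he : ‖e‖ = 1) {j k : ℕ} (hjk : j < k) {x : 𝔼 n}
    (hj : ‖x - ((2 : ℝ) ^ j)⁻¹ • e‖ ≤ 5 / 16 * ((2 : ℝ) ^ j)⁻¹)
    (hk : ‖x - ((2 : ℝ) ^ k)⁻¹ • e‖ ≤ 5 / 16 * ((2 : ℝ) ^ k)⁻¹) : False := by
  have hw : ∀ i : ℕ, ‖((2 : ℝ) ^ i)⁻¹ • e‖ = ((2 : ℝ) ^ i)⁻¹ := by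
    intro i
    rw [norm_smul, he, mul_one, Real.norm_of_nonneg (by positivity)]
  have h1 := (near_norm (hw j) hj).1
  have h2 := (near_norm (hw k) hk).2
  have h3 : ((2 : ℝ) ^ k)⁻¹ ≤ ((2 : ℝ) ^ (j + 1))⁻¹ := by
    gcongr
    · norm_num
    · exact hjk
  have h4 : ((2 : ℝ) ^ (j + 1))⁻¹ = ((2 : ℝ) ^ j)⁻¹ / 2 := by
    rw [pow_succ, mul_inv]; rfl
  have : 0 < ((2 : ℝ) ^ j)⁻¹ := by positivity
  linarith

lemma rad_le {j : ℕ} (hj : 2 ≤ j) : ((2 : ℝ) ^ (2 * j))⁻¹ ≤ ((2 : ℝ) ^ j)⁻¹ / 4 := by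
  have h3 : ((2 : ℝ) ^ (2 * j))⁻¹ ≤ ((2 : ℝ) ^ (j + 2))⁻¹ := by
    gcongr
    · norm_num
    · omega
  refine h3.trans (le_of_eq ?_)
  rw [pow_add, mul_inv]
  norm_num
  ring

lemma trich {n : ℕ} {e : 𝔼 n} (he : ‖e‖ = 1) (x : 𝔼 n) (hx2 : ‖x‖ < 2)
    (Ω : Set (EuclideanSpace ℝ (Fin n)))
    (hΩ : Ω = Metric.ball 0 2 \
      (insert (0 : EuclideanSpace ℝ (Fin n))
        (⋃ j : ℕ, ⋃ (_ : 2 ≤ j),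
          Metric.closedBall (((2 : ℝ) ^ j)⁻¹ • e) (((2 : ℝ) ^ (2 * j))⁻¹)))) :
    ‖x‖ / 41 ≤ infDist x Ωᶜ ∨ (1 ≤ ‖x‖ ∧ 2 - ‖x‖ ≤ infDist x Ωᶜ) ∨
    ∃ k : ℕ, 2 ≤ k ∧ ‖x - ((2 : ℝ) ^ k)⁻¹ • e‖ ≤ 9 / 32 * ((2 : ℝ) ^ k)⁻¹ ∧
      ‖x - ((2 : ℝ) ^ k)⁻¹ • e‖ - ((2 : ℝ) ^ (2 * k))⁻¹ ≤ infDist x Ωᶜ := by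
  have hw : ∀ i : ℕ, ‖((2 : ℝ) ^ i)⁻¹ • e‖ = ((2 : ℝ) ^ i)⁻¹ := by
    intro i
    rw [norm_smul, he, mul_one, Real.norm_of_nonneg (by positivity)]
  have hne : (Ωᶜ).Nonempty := ⟨0, by simp [hΩ]⟩
  have hcase : ∀ y ∈ Ωᶜ, 2 - ‖x‖ ≤ dist x y ∨ ‖x‖ ≤ dist x y ∨ ∃ j : ℕ, 2 ≤ j ∧
      ‖x - ((2 : ℝ) ^ j)⁻¹ • e‖ - ((2 : ℝ) ^ (2 * j))⁻¹ ≤ dist x y := by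
    intro y hy
    by_cases hy2 : ‖y‖ < 2
    · rw [hΩ] at hy
      simp only [Set.mem_compl_iff, Set.mem_sdiff, mem_ball, dist_zero_right, hy2, true_and,
        not_not, Set.mem_insert_iff, Set.mem_iUnion, mem_closedBall] at hy
      rcases hy with rfl | ⟨j, hj, hd⟩
      · right; left
        simp
      · right; right
        refine ⟨j, hj, ?_⟩
        rw [← dist_eq_norm]
        have := dist_triangle x y (((2 : ℝ) ^ j)⁻¹ • e)
        linarith
    · left
      have := norm_sub_norm_le y x
      rw [dist_comm, dist_eq_norm]
      linarith
  have hfar : ∀ j : ℕ, 2 ≤ j → ¬ ‖x - ((2 : ℝ) ^ j)⁻¹ • e‖ ≤ 9 / 32 * ((2 : ℝ) ^ j)⁻¹ →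
      ‖x‖ / 41 ≤ ‖x - ((2 : ℝ) ^ j)⁻¹ • e‖ - ((2 : ℝ) ^ (2 * j))⁻¹ := by
    intro j hj hn
    have h1 := rad_le hj
    have h2 : ‖x‖ ≤ ‖x - ((2 : ℝ) ^ j)⁻¹ • e‖ + ((2 : ℝ) ^ j)⁻¹ := by
      have := norm_add_le (x - ((2 : ℝ) ^ j)⁻¹ • e) (((2 : ℝ) ^ j)⁻¹ • e)
      rw [hw] at this
      simpa using this
    push Not at hn
    linarith
  have hx0 := norm_nonneg x
  by_cases hk : ∃ k : ℕ, 2 ≤ k ∧ ‖x - ((2 : ℝ) ^ k)⁻¹ • e‖ ≤ 9 / 32 * ((2 : ℝ) ^ k)⁻¹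
  · obtain ⟨k, hk2, hk⟩ := hk
    have hpos : ∀ i : ℕ, 0 < ((2 : ℝ) ^ i)⁻¹ := fun i => by positivity
    have hk' : ‖x - ((2 : ℝ) ^ k)⁻¹ • e‖ ≤ 5 / 16 * ((2 : ℝ) ^ k)⁻¹ := by
      linarith [hpos k]
    have hx1 : ‖x‖ ≤ 1 := by
      have h1 := (near_norm (hw k) hk').2
      have h2 : ((2 : ℝ) ^ k)⁻¹ ≤ ((2 : ℝ) ^ 2)⁻¹ := by
        gcongr
        norm_num
      norm_num at h2 h1
      linarith
    have hmin : min (‖x‖ / 41) (‖x - ((2 : ℝ) ^ k)⁻¹ • e‖ - ((2 : ℝ) ^ (2 * k))⁻¹) ≤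
        infDist x Ωᶜ := by
      rw [le_infDist hne]
      intro y hy
      rcases hcase y hy with h | h | ⟨j, hj, h⟩
      · exact (min_le_left _ _).trans (by linarith)
      · exact (min_le_left _ _).trans (by linarith)
      · by_cases hjk : j = k
        · subst hjk
          exact (min_le_right _ _).trans h
        · refine (min_le_left _ _).trans ((hfar j hj ?_).trans h)
          intro hh
          have hh' : ‖x - ((2 : ℝ) ^ j)⁻¹ • e‖ ≤ 5 / 16 * ((2 : ℝ) ^ j)⁻¹ := by
            linarith [hpos j]
          rcases lt_or_gt_of_ne hjk with h' | h'
          · exact near_disj he h' hh' hk'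
          · exact near_disj he h' hk' hh'
    rcases min_choice (‖x‖ / 41) (‖x - ((2 : ℝ) ^ k)⁻¹ • e‖ - ((2 : ℝ) ^ (2 * k))⁻¹) with h | h
    · left; rwa [h] at hmin
    · right; right
      exact ⟨k, hk2, hk, by rwa [h] at hmin⟩
  · push Not at hk
    have hmin : min (‖x‖ / 41) (2 - ‖x‖) ≤ infDist x Ωᶜ := by
      rw [le_infDist hne]
      intro y hy
      rcases hcase y hy with h | h | ⟨j, hj, h⟩
      · exact (min_le_right _ _).trans h
      · exact (min_le_left _ _).trans (by linarith)
      · exact (min_le_left _ _).trans ((hfar j hj (not_le.mpr (hk j hj))).trans h)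
    rcases min_choice (‖x‖ / 41) (2 - ‖x‖) with h | h
    · left; rwa [h] at hmin
    · by_cases hx1 : 1 ≤ ‖x‖
      · right; left
        exact ⟨hx1, by rwa [h] at hmin⟩
      · left
        rw [h] at hmin
        push Not at hx1
        linarith

end HB

theorem hardy_balls_sequence_example
    (n : ℕ) (hn : 2 ≤ n)
    (e₁ : EuclideanSpace ℝ (Fin n))
    (he₁ : e₁ = EuclideanSpace.single (⟨0, by omega⟩ : Fin n) (1 : ℝ))
    (Ω : Set (EuclideanSpace ℝ (Fin n)))
    (hΩ : Ω = Metric.ball 0 2 \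
      (insert (0 : EuclideanSpace ℝ (Fin n))
        (⋃ j : ℕ, ⋃ (_ : 2 ≤ j),
          Metric.closedBall (((2 : ℝ) ^ j)⁻¹ • e₁) (((2 : ℝ) ^ (2 * j))⁻¹))))
    (p : ℝ) (hp1 : 1 < p) (hpn : p < n) :
    ∃ C : ℝ, 0 < C ∧ ∀ u : EuclideanSpace ℝ (Fin n) → ℝ,
      (∃ L : NNReal, LipschitzWith L u) → HasCompactSupport u → tsupport u ⊆ Ω →
      ∫⁻ x in Ω, ENNReal.ofReal (|u x| ^ p * Metric.infDist x Ωᶜ ^ (-p)) ≤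
        ENNReal.ofReal C * ∫⁻ x in Ω, ENNReal.ofReal (‖fderiv ℝ u x‖ ^ p) := by
  have hp0 : 0 < p := by linarith
  have he : ‖e₁‖ = 1 := by simp [he₁]
  obtain ⟨Ca, hCa, ha⟩ := HB.hardy_pt hp1 hpn
  obtain ⟨Cb, hCb, hb⟩ := HB.hardy_in (n := n) hp1
  obtain ⟨Cl, hCl, hl⟩ := HB.loc hp1 hpn
  refine ⟨41 ^ p * Ca + Cb + Cl * (1 + Ca), by positivity, ?_⟩
  rintro u ⟨L, hu⟩ huc hsupp
  have hw : ∀ i : ℕ, ‖((2 : ℝ) ^ i)⁻¹ • e₁‖ = ((2 : ℝ) ^ i)⁻¹ := by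
    intro i
    rw [norm_smul, he, mul_one, Real.norm_of_nonneg (by positivity)]
  have hm : Measurable u := hu.continuous.measurable
  have hΩ0 : ∀ x ∈ Ω, x ≠ 0 ∧ ‖x‖ < 2 ∧ ∀ j : ℕ, 2 ≤ j →
      ((2 : ℝ) ^ (2 * j))⁻¹ < ‖x - ((2 : ℝ) ^ j)⁻¹ • e₁‖ := by
    intro x hx
    rw [hΩ] at hx
    simp only [Set.mem_sdiff, mem_ball, Set.mem_insert_iff, Set.mem_iUnion,
      mem_closedBall, not_or, not_exists, not_le, dist_eq_norm] at hx
    exact ⟨hx.2.1, by simpa using hx.1, hx.2.2⟩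
  have hI : ∫⁻ x in Ω, ENNReal.ofReal (‖fderiv ℝ u x‖ ^ p) =
      ∫⁻ x, ENNReal.ofReal (‖fderiv ℝ u x‖ ^ p) := by
    apply setLIntegral_eq_of_support_subset
    intro x hx
    apply hsupp
    apply support_fderiv_subset ℝ
    intro h
    apply hx
    simp [h, Real.zero_rpow hp0.ne']
  rw [hI]
  set I := ∫⁻ x, ENNReal.ofReal (‖fderiv ℝ u x‖ ^ p) with hIdef
  have ka : ∫⁻ x, ENNReal.ofReal (|u x| ^ p * ‖x‖ ^ (-p)) ≤ ENNReal.ofReal Ca * I := by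
    have := ha 0 u L hu huc (fun x hx => (hΩ0 x (hsupp hx)).1)
    simpa using this
  have kb := hb u L hu huc (fun x hx => ⟨norm_pos_iff.mpr (hΩ0 x (hsupp hx)).1,
    (hΩ0 x (hsupp hx)).2.1⟩)
  let w : ℕ → EuclideanSpace ℝ (Fin n) := fun j => ((2 : ℝ) ^ (j + 2))⁻¹ • e₁
  let a : ℕ → ℝ := fun j => ((2 : ℝ) ^ (j + 2))⁻¹
  let r : ℕ → ℝ := fun j => ((2 : ℝ) ^ (2 * (j + 2)))⁻¹
  let F : EuclideanSpace ℝ (Fin n) → ℝ≥0∞ := fun x =>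
    ENNReal.ofReal (‖fderiv ℝ u x‖ ^ p) + ENNReal.ofReal (|u x| ^ p * ‖x‖ ^ (-p))
  have hmf : Measurable (fun x => ENNReal.ofReal (‖fderiv ℝ u x‖ ^ p)) :=
    ((measurable_fderiv ℝ u).norm.pow_const p).ennreal_ofReal
  have kl : ∀ j, ∫⁻ x in closedBall (w j) (9 / 32 * a j),
      ENNReal.ofReal (|u x| ^ p * (‖x - w j‖ - r j) ^ (-p)) ≤
      ENNReal.ofReal Cl * ∫⁻ x in closedBall (w j) (5 / 16 * a j), F x := fun j =>
    hl (w j) (a j) (r j) u L (by positivity) (by positivity) (hw _) hu huc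
      (fun x hx => (hΩ0 x (hsupp hx)).2.2 (j + 2) (by omega))
  have hF : ∫⁻ x, F x ≤ ENNReal.ofReal (1 + Ca) * I := by
    simp only [F]
    rw [lintegral_add_left hmf, ENNReal.ofReal_add (by norm_num) hCa.le, add_mul]
    simp only [ENNReal.ofReal_one, one_mul]
    gcongr
  have hdisj : Pairwise (Function.onFun Disjoint fun j => closedBall (w j) (5 / 16 * a j)) := by
    intro j k hjk
    rw [Function.onFun, Set.disjoint_left]
    intro x hxj hxk
    rw [mem_closedBall, dist_eq_norm] at hxj hxk
    rcases lt_or_gt_of_ne hjk with h | h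
    · exact HB.near_disj he (show j + 2 < k + 2 by omega) hxj hxk
    · exact HB.near_disj he (show k + 2 < j + 2 by omega) hxk hxj
  have ksum : ∑' j, ∫⁻ x in closedBall (w j) (9 / 32 * a j),
      ENNReal.ofReal (|u x| ^ p * (‖x - w j‖ - r j) ^ (-p)) ≤
      ENNReal.ofReal (Cl * (1 + Ca)) * I := by
    calc _ ≤ ∑' j, ENNReal.ofReal Cl * ∫⁻ x in closedBall (w j) (5 / 16 * a j), F x :=
          ENNReal.tsum_le_tsum kl
      _ = ENNReal.ofReal Cl * ∫⁻ x in ⋃ j, closedBall (w j) (5 / 16 * a j), F x := by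
          rw [ENNReal.tsum_mul_left, lintegral_iUnion (fun j => measurableSet_closedBall) hdisj]
      _ ≤ ENNReal.ofReal Cl * ∫⁻ x, F x := by
          gcongr
          exact Measure.restrict_le_self
      _ ≤ ENNReal.ofReal Cl * (ENNReal.ofReal (1 + Ca) * I) := by gcongr
      _ = _ := by rw [ENNReal.ofReal_mul hCl.le, mul_assoc]
  let S : ℕ → EuclideanSpace ℝ (Fin n) → ℝ≥0∞ := fun j =>
    (closedBall (w j) (9 / 32 * a j)).indicator
      (fun x => ENNReal.ofReal (|u x| ^ p * (‖x - w j‖ - r j) ^ (-p)))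
  have hSm : ∀ j, Measurable (S j) := by
    intro j
    apply Measurable.indicator _ measurableSet_closedBall
    fun_prop
  have hpt : ∀ x, ENNReal.ofReal (|u x| ^ p * Metric.infDist x Ωᶜ ^ (-p)) ≤
      ENNReal.ofReal (41 ^ p) * ENNReal.ofReal (|u x| ^ p * ‖x‖ ^ (-p)) +
      ENNReal.ofReal (|u x| ^ p * (‖x‖ * (2 - ‖x‖) ^ (-p))) + ∑' j, S j x := by
    intro x
    by_cases hxs : x ∈ tsupport u
    swap
    · simp [image_eq_zero_of_notMem_tsupport hxs, Real.zero_rpow hp0.ne']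
    obtain ⟨hx0, hx2, hxj⟩ := hΩ0 x (hsupp hxs)
    have hxn : 0 < ‖x‖ := norm_pos_iff.mpr hx0
    rcases HB.trich he x hx2 Ω hΩ with h | ⟨h1, h⟩ | ⟨k, hk, hk1, h⟩
    · refine le_trans ?_ (le_trans le_self_add le_self_add)
      rw [← ENNReal.ofReal_mul (by positivity)]
      apply ENNReal.ofReal_le_ofReal
      have h3 : infDist x Ωᶜ ^ (-p) ≤ (‖x‖ / 41) ^ (-p) :=
        Real.rpow_le_rpow_of_nonpos (by positivity) h (by linarith)
      have h4 : (‖x‖ / 41) ^ (-p) = 41 ^ p * ‖x‖ ^ (-p) := by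
        rw [Real.div_rpow hxn.le (by norm_num), Real.rpow_neg (by norm_num : (0 : ℝ) ≤ 41)]
        field_simp
      rw [h4] at h3
      calc _ ≤ |u x| ^ p * (41 ^ p * ‖x‖ ^ (-p)) := by gcongr
        _ = _ := by ring
    · refine le_trans ?_ (le_trans le_add_self le_self_add)
      apply ENNReal.ofReal_le_ofReal
      have hpos : 0 < 2 - ‖x‖ := by linarith
      have h3 : infDist x Ωᶜ ^ (-p) ≤ (2 - ‖x‖) ^ (-p) :=
        Real.rpow_le_rpow_of_nonpos hpos h (by linarith)
      have h4 : 0 ≤ (2 - ‖x‖) ^ (-p) := by positivity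
      gcongr
      nlinarith
    · refine le_trans ?_ le_add_self
      obtain ⟨j, rfl⟩ : ∃ j, k = j + 2 := ⟨k - 2, by omega⟩
      refine le_trans ?_ (ENNReal.le_tsum j)
      have hmem : x ∈ closedBall (w j) (9 / 32 * a j) := by
        rw [mem_closedBall, dist_eq_norm]
        exact hk1
      simp only [S]
      rw [Set.indicator_of_mem hmem]
      apply ENNReal.ofReal_le_ofReal
      have hpos := sub_pos.mpr (hxj (j + 2) hk)
      have h3 : infDist x Ωᶜ ^ (-p) ≤ (‖x - w j‖ - r j) ^ (-p) :=
        Real.rpow_le_rpow_of_nonpos hpos h (by linarith)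
      gcongr
  calc ∫⁻ x in Ω, ENNReal.ofReal (|u x| ^ p * Metric.infDist x Ωᶜ ^ (-p))
      ≤ ∫⁻ x, ENNReal.ofReal (|u x| ^ p * Metric.infDist x Ωᶜ ^ (-p)) :=
        setLIntegral_le_lintegral _ _
    _ ≤ ∫⁻ x, (ENNReal.ofReal (41 ^ p) * ENNReal.ofReal (|u x| ^ p * ‖x‖ ^ (-p)) +
      ENNReal.ofReal (|u x| ^ p * (‖x‖ * (2 - ‖x‖) ^ (-p))) + ∑' j, S j x) := lintegral_mono hpt
    _ = ENNReal.ofReal (41 ^ p) * (∫⁻ x, ENNReal.ofReal (|u x| ^ p * ‖x‖ ^ (-p))) +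
      (∫⁻ x, ENNReal.ofReal (|u x| ^ p * (‖x‖ * (2 - ‖x‖) ^ (-p)))) +
      ∑' j, ∫⁻ x in closedBall (w j) (9 / 32 * a j),
        ENNReal.ofReal (|u x| ^ p * (‖x - w j‖ - r j) ^ (-p)) := by
        rw [lintegral_add_left (by fun_prop), lintegral_add_left (by fun_prop),
          lintegral_const_mul' _ _ ENNReal.ofReal_ne_top,
          lintegral_tsum (fun j => (hSm j).aemeasurable)]
        congr 2
        ext j
        exact lintegral_indicator measurableSet_closedBall _
    _ ≤ ENNReal.ofReal (41 ^ p) * (ENNReal.ofReal Ca * I) + ENNReal.ofReal Cb * I +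
        ENNReal.ofReal (Cl * (1 + Ca)) * I := by gcongr
    _ = _ := by
        rw [ENNReal.ofReal_add (by positivity) (by positivity),
          ENNReal.ofReal_add (by positivity) (by positivity),
          ENNReal.ofReal_mul (by positivity : (0 : ℝ) ≤ 41 ^ p)]
        ring
end
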